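/- arXiv:math/0612359 — 2 statements merged into one kernel-verified Lean document; each statement's English description precedes it below -/
import Mathlib

section
/- Let E be a complex Banach space of functions on ℝ⁺ satisfying (H1), (H2), (H3), and let T be a Wiener-Hopf operator on E. Then there exists a linear functional μ_T on C_c^∞(ℝ) which is a distribution of order 1 — i.e. for every compact K ⊂ ℝ there is a constant C_K with |⟨μ_T, f⟩| ≤ C_K (‖f‖_∞ + ‖f′‖_∞) for all f ∈ C_c^∞(ℝ) with support in K — such that for every f ∈ C_c^∞((0,∞)), (Tf)(x) = ⟨μ_T, z ↦ f(x − z)⟩ for almost every x ∈ ℝ⁺; that is, Tf = P⁺(μ_T ∗ f). -/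
open Complex Filter Topology

noncomputable section

/-- Translation by `a`, cut off to `ℝ⁺`: `(transFun a f) x = f (x - a)` for `x ≥ 0`,
and `0` for `x < 0`.  For `a ≥ 0` and `f` supported in `ℝ⁺` this is the operator `S_a`,
and for `a = -b ≤ 0` it is the operator `S_{-b} : f ↦ f (· + b)`. -/
def transFun {α : Type*} [Zero α] (a : ℝ) (f : ℝ → α) : ℝ → α :=
  fun x => if 0 ≤ x then f (x - a) else 0

/-- Modulation: `(modFun a f) x = e^{iax} f x`. -/
def modFun (a : ℝ) (f : ℝ → ℂ) : ℝ → ℂ :=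
  fun x => Complex.exp (Complex.I * (a : ℂ) * (x : ℂ)) * f x

/-- `C^∞` functions with compact support contained in `(0, ∞)`. -/
def IsTestPlus (g : ℝ → ℂ) : Prop :=
  ContDiff ℝ (⊤ : ℕ∞) g ∧ HasCompactSupport g ∧ tsupport g ⊆ Set.Ioi (0 : ℝ)

/-- `C^∞` functions with compact support on `ℝ`. -/
def IsTest (g : ℝ → ℂ) : Prop :=
  ContDiff ℝ (⊤ : ℕ∞) g ∧ HasCompactSupport g

/-- The Fourier transformation `(𝓕 f)(ξ) = (2π)^{-1/2} ∫ f x e^{-iξx} dx`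
(defined by this integral formula; it is applied below only to integrable functions,
on which it agrees with the Fourier–Plancherel transformation). -/
def FT {H : Type*} [NormedAddCommGroup H] [NormedSpace ℂ H] (f : ℝ → H) : ℝ → H :=
  fun ξ => (Real.sqrt (2 * Real.pi))⁻¹ •
    ∫ x : ℝ, Complex.exp (-(Complex.I * (ξ : ℂ) * (x : ℂ))) • f x

/-- The inverse Fourier transformation `(𝓕⁻¹ f)(x) = (2π)^{-1/2} ∫ f ξ e^{iξx} dξ`. -/
def FTinv {H : Type*} [NormedAddCommGroup H] [NormedSpace ℂ H] (f : ℝ → H) : ℝ → H :=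
  fun x => (Real.sqrt (2 * Real.pi))⁻¹ •
    ∫ ξ : ℝ, Complex.exp (Complex.I * (ξ : ℂ) * (x : ℂ)) • f ξ

/-- A complex Banach space `E` of (a.e.-equivalence classes of) locally integrable
functions on `ℝ⁺` — realized as functions on `ℝ` vanishing a.e. on `(-∞, 0)` —
satisfying the hypotheses (H1), (H2) and (H3). -/
structure WHSpace where
  /-- the carrier Banach space -/
  E : Type
  [nacg : NormedAddCommGroup E]
  [nsp : NormedSpace ℂ E]
  [cpl : CompleteSpace E]
  /-- the realization of elements of `E` as functions on `ℝ⁺`; two elements of `E`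
  coincide iff their realizations agree almost everywhere -/
  toFun : E →ₗ[ℂ] (ℝ → ℂ)
  inj : ∀ f g : E, toFun f =ᵐ[MeasureTheory.volume] toFun g → f = g
  meas : ∀ f : E, MeasureTheory.AEStronglyMeasurable (toFun f) MeasureTheory.volume
  supp : ∀ f : E, ∀ᵐ x ∂MeasureTheory.volume, x < 0 → toFun f x = 0
  /-- (H1): `E ⊆ L¹_loc` -/
  locInt : ∀ f : E, MeasureTheory.LocallyIntegrable (toFun f) MeasureTheory.volume
  /-- (H1): the inclusion `E ⊆ L¹_loc(ℝ⁺)` is continuous -/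
  incl_cont : ∀ K : Set ℝ, IsCompact K → ∃ C > 0, ∀ f : E,
    ∫ x in K, ‖toFun f x‖ ≤ C * ‖f‖
  /-- (H1): `C_c^∞((0,∞)) ⊆ E` -/
  test_mem : ∀ g : ℝ → ℂ, IsTestPlus g → ∃ f : E, toFun f =ᵐ[MeasureTheory.volume] g
  /-- (H1): the inclusion `C_c^∞((0,∞)) ⊆ E` is continuous -/
  test_cont : ∀ K : Set ℝ, IsCompact K → ∃ C > 0, ∃ N : ℕ,
    ∀ (f : E) (g : ℝ → ℂ), IsTestPlus g → tsupport g ⊆ K →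
      toFun f =ᵐ[MeasureTheory.volume] g →
      ‖f‖ ≤ C * ∑ k ∈ Finset.range (N + 1), ⨆ x : ℝ, ‖iteratedDeriv k g x‖
  /-- (H1): `C_c^∞((0,∞))` is dense in `E` -/
  test_dense : Dense {f : E | ∃ g : ℝ → ℂ, IsTestPlus g ∧ toFun f =ᵐ[MeasureTheory.volume] g}
  /-- (H2): the translations `S_a`, `a ∈ ℝ`, act boundedly on `E` -/
  S : ℝ → E →L[ℂ] E
  S_spec : ∀ (a : ℝ) (f : E), toFun (S a f) =ᵐ[MeasureTheory.volume] transFun a (toFun f)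
  /-- (H2): `sup_{a ∈ K} ‖S_a‖ < ∞` for every compact `K ⊆ ℝ` -/
  S_bdd : ∀ K : Set ℝ, IsCompact K → ∃ C : ℝ, ∀ a ∈ K, ‖S a‖ ≤ C
  /-- (H3): the modulations `Γ_a`, `a ∈ ℝ`, act boundedly on `E` -/
  Mod : ℝ → E →L[ℂ] E
  Mod_spec : ∀ (a : ℝ) (f : E), toFun (Mod a f) =ᵐ[MeasureTheory.volume] modFun a (toFun f)
  /-- (H3): `sup_{a ∈ ℝ} ‖Γ_a‖ < ∞` -/
  Mod_bdd : ∃ C : ℝ, ∀ a : ℝ, ‖Mod a‖ ≤ C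

attribute [instance] WHSpace.nacg WHSpace.nsp WHSpace.cpl

open MeasureTheory

/-- A Wiener-Hopf operator on `E`: a bounded operator `T` with `S_{-a} T S_a = T`
for all `a ≥ 0`. -/
def IsWienerHopf (W : WHSpace) (T : W.E →L[ℂ] W.E) : Prop :=
  ∀ a : ℝ, 0 ≤ a → (W.S (-a)).comp (T.comp (W.S a)) = T

/-- `ρ(S)`, the spectral radius of `S = S_1`. -/
def WHSpace.rS (W : WHSpace) : ℝ := (spectralRadius ℂ (W.S 1)).toReal

/-- `ρ(S_{-1})`, the spectral radius of `S_{-1}`. -/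
def WHSpace.rSm (W : WHSpace) : ℝ := (spectralRadius ℂ (W.S (-1))).toReal

/-- `I_E = [-ln ρ(S_{-1}), ln ρ(S)]`. -/
def WHSpace.IE (W : WHSpace) : Set ℝ := Set.Icc (-Real.log W.rSm) (Real.log W.rS)

/-- `U_E = {z ∈ ℂ : Im z ∈ I_E}`. -/
def WHSpace.UE (W : WHSpace) : Set ℂ := {z : ℂ | z.im ∈ W.IE}

/-- The open strip `int U_E = {z ∈ ℂ : -ln ρ(S_{-1}) < Im z < ln ρ(S)}`. -/
def WHSpace.stripE (W : WHSpace) : Set ℂ :=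
  {z : ℂ | z.im ∈ Set.Ioo (-Real.log W.rSm) (Real.log W.rS)}

/-- `A = T_φ`, i.e. `A f = P⁺ (φ ∗ f)` for every `f ∈ C_c^∞((0,∞))`.
(Such an operator is unique, by density of `C_c^∞((0,∞))` in `E`.) -/
def IsConvOp (W : WHSpace) (φ : ℝ → ℂ) (A : W.E →L[ℂ] W.E) : Prop :=
  ∀ (f : W.E) (g : ℝ → ℂ), IsTestPlus g → W.toFun f =ᵐ[volume] g →
    ∀ᵐ x ∂(volume.restrict (Set.Ici (0 : ℝ))),
      W.toFun (A f) x = ∫ y : ℝ, φ y * g (x - y)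

/-! On functions vanishing on `[0, h)` a Wiener-Hopf operator `T` commutes with `S_{-h}`, so `T`
carries the difference quotients of a test function `f` to those of `Tf`. Since `E` embeds
continuously in `L¹_loc`, `Tf` is absolutely continuous with derivative `T(f')`, and on `[0, X]` it
is bounded by a multiple of `‖f‖_E + ‖f'‖_E`. Put `⟨μ_T, g⟩ = (T g(a - ·))(a)` for `a` large;
translation invariance makes this independent of `a`.

The order comes from modulations: each `Γ_{-ξ} T Γ_ξ` is again a Wiener-Hopf operator, and (H3)
bounds their norms uniformly, so for a fixed cutoff `χ` the functions `T(e^{iξ·} χ)` are bounded on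
`[0, X]` uniformly in `ξ`. Expanding `f = f χ` in a Fourier series, whose coefficients have `ℓ¹`
norm controlled by `‖f‖_∞ + ‖f'‖_∞`, gives the same control for `Tf` on `[0, X]`.
-/

open scoped Real

section FourierSeries

variable {a b A B : ℝ} {f f' : ℝ → ℂ}

lemma norm_fourierCoeffOn_le (hab : a < b) (hf : ∀ x ∈ Set.Ioc a b, ‖f x‖ ≤ A) (n : ℤ) :
    ‖fourierCoeffOn hab f n‖ ≤ A := by
  have hba : 0 < b - a := sub_pos.2 hab
  have : Fact (0 < b - a) := ⟨hba⟩
  have h_int : ‖∫ x in a..b, fourier (-n) (x : AddCircle (b - a)) • f x‖ ≤ A * |b - a| :=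
    intervalIntegral.norm_integral_le_of_norm_le_const fun x hx => by
      rw [norm_smul, fourier_apply, Circle.norm_coe, one_mul]
      exact hf x (Set.uIoc_of_le hab.le ▸ hx)
  rw [abs_of_pos hba] at h_int
  rw [fourierCoeffOn_eq_integral, norm_smul, Real.norm_of_nonneg (by positivity), one_div,
    inv_mul_le_iff₀ hba]
  linarith

lemma tsum_sq_norm_fourierCoeffOn_le (hab : a < b)
    (hf_meas : AEStronglyMeasurable f (volume.restrict (Set.Ioc a b)))
    (hf : ∀ x ∈ Set.Ioc a b, ‖f x‖ ≤ B) :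
    Summable (fun n => ‖fourierCoeffOn hab f n‖ ^ 2) ∧
      ∑' n, ‖fourierCoeffOn hab f n‖ ^ 2 ≤ B ^ 2 := by
  have hba : 0 < b - a := sub_pos.2 hab
  have parseval := hasSum_sq_fourierCoeffOn hab <|
    MemLp.of_bound hf_meas B ((ae_restrict_iff' measurableSet_Ioc).2 (.of_forall hf))
  refine ⟨parseval.summable, ?_⟩
  have h_int : ‖∫ x in a..b, ‖f x‖ ^ 2‖ ≤ B ^ 2 * |b - a| :=
    intervalIntegral.norm_integral_le_of_norm_le_const fun x hx => by
      rw [norm_pow, norm_norm]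
      gcongr
      exact hf x (Set.uIoc_of_le hab.le ▸ hx)
  rw [abs_of_pos hba] at h_int
  rw [parseval.tsum_eq, smul_eq_mul, inv_mul_le_iff₀ hba, mul_comm (b - a)]
  exact (le_abs_self _).trans h_int

lemma norm_fourierCoeffOn_of_hasDerivAt (hab : a < b)
    (hf : ∀ x ∈ Set.Icc a b, HasDerivAt f (f' x) x) (hf' : IntervalIntegrable f' volume a b)
    (hfab : f a = f b) {n : ℤ} (hn : n ≠ 0) :
    ‖fourierCoeffOn hab f n‖ = (b - a) / (2 * π) * (|(n : ℝ)|⁻¹ * ‖fourierCoeffOn hab f' n‖) := by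
  rw [fourierCoeffOn_of_hasDerivAt hab hn (Set.uIcc_of_le hab.le ▸ hf) hf', hfab, sub_self,
    mul_zero, zero_sub, ← ofReal_sub]
  simp only [norm_mul, norm_div, norm_neg, norm_one, norm_real, norm_intCast, norm_I, norm_ofNat,
    Real.norm_of_nonneg Real.pi_pos.le, Real.norm_of_nonneg (sub_pos.2 hab).le]
  ring

lemma tsum_abs_inv_mul_norm_fourierCoeffOn_le (hab : a < b)
    (hf_meas : AEStronglyMeasurable f (volume.restrict (Set.Ioc a b)))
    (hf : ∀ x ∈ Set.Ioc a b, ‖f x‖ ≤ B) :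
    Summable (fun n : ℤ => |(n : ℝ)|⁻¹ * ‖fourierCoeffOn hab f n‖) ∧
      ∑' n : ℤ, |(n : ℝ)|⁻¹ * ‖fourierCoeffOn hab f n‖ ≤ √(∑' n : ℤ, 1 / (n : ℝ) ^ 2) * B := by
  have hB : 0 ≤ B := (norm_nonneg _).trans (hf b (Set.right_mem_Ioc.2 hab))
  obtain ⟨h_sq_summable, h_sq⟩ := tsum_sq_norm_fourierCoeffOn_le hab hf_meas hf
  have h_inv_sq (n : ℤ) : |(n : ℝ)|⁻¹ ^ (2 : ℝ) = 1 / (n : ℝ) ^ 2 := by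
    rw [Real.rpow_two, inv_pow, sq_abs, one_div]
  obtain ⟨h_summable, cauchy_schwarz⟩ := Real.summable_and_inner_le_Lp_mul_Lq_tsum_of_nonneg
    (f := fun n : ℤ => |(n : ℝ)|⁻¹) (g := fun n => ‖fourierCoeffOn hab f n‖)
    Real.HolderConjugate.two_two (fun _ => by positivity) (fun _ => norm_nonneg _)
    (by simpa only [h_inv_sq] using Real.summable_one_div_int_pow.2 one_lt_two)
    (by simpa only [Real.rpow_two] using h_sq_summable)
  simp only [h_inv_sq, Real.rpow_two, ← Real.sqrt_eq_rpow] at cauchy_schwarz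
  refine ⟨h_summable, cauchy_schwarz.trans ?_⟩
  gcongr
  exact Real.sqrt_le_iff.2 ⟨hB, h_sq⟩

lemma tsum_norm_fourierCoeffOn_le (hab : a < b)
    (hf : ∀ x ∈ Set.Icc a b, HasDerivAt f (f' x) x)
    (hf'_meas : AEStronglyMeasurable f' (volume.restrict (Set.Ioc a b))) (hfab : f a = f b)
    (hA : ∀ x ∈ Set.Ioc a b, ‖f x‖ ≤ A) (hB : ∀ x ∈ Set.Ioc a b, ‖f' x‖ ≤ B) :
    Summable (fun n => ‖fourierCoeffOn hab f n‖) ∧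
      ∑' n, ‖fourierCoeffOn hab f n‖ ≤
        A + (b - a) / (2 * π) * (√(∑' n : ℤ, 1 / (n : ℝ) ^ 2) * B) := by
  have : 0 ≤ A := (norm_nonneg _).trans (hA b (Set.right_mem_Ioc.2 hab))
  have hf' : IntervalIntegrable f' volume a b :=
    (intervalIntegrable_iff_integrableOn_Ioc_of_le hab.le).2 <|
      MemLp.integrable le_rfl <|
        MemLp.of_bound hf'_meas B ((ae_restrict_iff' measurableSet_Ioc).2 (.of_forall hB))
  obtain ⟨h_prod_summable, h_prod⟩ := tsum_abs_inv_mul_norm_fourierCoeffOn_le hab hf'_meas hB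
  have h_le (n : ℤ) : ‖fourierCoeffOn hab f n‖ ≤ (if n = 0 then A else 0) +
      (b - a) / (2 * π) * (|(n : ℝ)|⁻¹ * ‖fourierCoeffOn hab f' n‖) := by
    rcases eq_or_ne n 0 with rfl | hn
    · simpa using norm_fourierCoeffOn_le hab hA 0
    · rw [if_neg hn, zero_add, norm_fourierCoeffOn_of_hasDerivAt hab hf hf' hfab hn]
  have h_bound := (hasSum_ite_eq (0 : ℤ) A).add
    (h_prod_summable.hasSum.mul_left ((b - a) / (2 * π)))
  have h_summable := Summable.of_nonneg_of_le (fun _ => norm_nonneg _) h_le h_bound.summable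
  refine ⟨h_summable, (hasSum_le h_le h_summable.hasSum h_bound).trans ?_⟩
  have := sub_pos.2 hab
  gcongr

lemma hasSum_fourierCoeffOn_mul_exp (hab : a < b) (hf : ContinuousOn f (Set.Icc a b))
    (hfab : f a = f b) (h_sum : Summable (fourierCoeffOn hab f)) {x : ℝ}
    (hx : x ∈ Set.Icc a b) :
    HasSum (fun n : ℤ => fourierCoeffOn hab f n * exp (I * (2 * π * n / (b - a) : ℝ) * x))
      (f x) := by
  have : Fact (0 < b - a) := ⟨sub_pos.2 hab⟩
  have h_end : a + (b - a) = b := add_sub_cancel a b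
  let F : C(AddCircle (b - a), ℂ) :=
    ⟨AddCircle.liftIco (b - a) a f, AddCircle.liftIco_continuous (by rw [h_end, hfab])
      (by rwa [h_end])⟩
  have h_coeff : fourierCoeff F = fourierCoeffOn hab f := by
    funext n
    refine (fourierCoeff_liftIco_eq (T := b - a) (a := a) f n).trans ?_
    simp only [h_end]
  have h_apply : F x = f x := by
    change AddCircle.liftIco (b - a) a f x = f x
    rcases hx.2.eq_or_lt with rfl | hxb
    · have hxa : (x : AddCircle (x - a)) = a := by simpa using AddCircle.coe_add_period (x - a) a
      rw [hxa, AddCircle.liftIco_coe_apply ⟨le_rfl, by linarith⟩, hfab]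
    · rw [AddCircle.liftIco_coe_apply ⟨hx.1, by linarith⟩]
  have h := has_pointwise_sum_fourier_series_of_summable (h_coeff ▸ h_sum) (x : AddCircle (b - a))
  rw [h_apply, h_coeff] at h
  convert h using 2 with n
  rw [smul_eq_mul, fourier_coe_apply]
  congr 2
  push_cast
  ring

end FourierSeries

section SlopeError

variable {F : Type*} [NormedAddCommGroup F] [NormedSpace ℝ F] {f : ℝ → F} {h δ M : ℝ}

/-- The error made when the derivative of `f` is replaced by its forward difference quotient
with step `h`. -/
def slopeError (h : ℝ) (f : ℝ → F) (x : ℝ) : F :=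
  h⁻¹ • (f (x + h) - f x) - deriv f x

lemma contDiff_slopeError (hf : ContDiff ℝ (⊤ : ℕ∞) f) (h : ℝ) :
    ContDiff ℝ (⊤ : ℕ∞) (slopeError h f) :=
  (((hf.comp (contDiff_id.add contDiff_const)).sub hf).const_smul h⁻¹).sub
    (contDiff_infty_iff_deriv.1 hf).2

lemma iteratedDeriv_slopeError (hf : ContDiff ℝ (⊤ : ℕ∞) f) (h : ℝ) (k : ℕ) :
    iteratedDeriv k (slopeError h f) = slopeError h (iteratedDeriv k f) := by
  have hk : ((k : ℕ∞) : WithTop ℕ∞) ≤ (⊤ : ℕ∞) := mod_cast le_top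
  have h_shift : ContDiff ℝ k (fun x => f (x + h)) :=
    (hf.comp (contDiff_id.add contDiff_const)).of_le hk
  have h_deriv : ContDiff ℝ k (deriv f) := (contDiff_infty_iff_deriv.1 hf).2.of_le hk
  have hf_k : ContDiff ℝ k f := hf.of_le hk
  have h_quot : ContDiff ℝ k (h⁻¹ • ((fun x => f (x + h)) - f)) :=
    (h_shift.sub hf_k).const_smul h⁻¹
  have h_eq : slopeError h f = h⁻¹ • ((fun x => f (x + h)) - f) - deriv f := rfl
  funext x
  rw [h_eq, iteratedDeriv_sub h_quot.contDiffAt h_deriv.contDiffAt,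
    iteratedDeriv_const_smul_field, iteratedDeriv_sub h_shift.contDiffAt hf_k.contDiffAt,
    iteratedDeriv_comp_add_const, ← iteratedDeriv_succ', iteratedDeriv_succ]
  rfl

lemma norm_slopeError_le (hf : Differentiable ℝ f) (hf' : Differentiable ℝ (deriv f))
    (hM : ∀ x, ‖deriv (deriv f) x‖ ≤ M) (hh : 0 < h) (x : ℝ) :
    ‖slopeError h f x‖ ≤ h * M := by
  have h_lip (y : ℝ) : ‖deriv f y - deriv f x‖ ≤ M * ‖y - x‖ :=
    convex_univ.norm_image_sub_le_of_norm_deriv_le (fun z _ => hf' z) (fun z _ => hM z)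
      trivial trivial
  have h_deriv (y : ℝ) : HasDerivAt (fun y => f y - y • deriv f x) (deriv f y - deriv f x) y := by
    simpa using (hf y).hasDerivAt.fun_sub ((hasDerivAt_id y).smul_const (deriv f x))
  have h_mean := norm_image_sub_le_of_norm_deriv_le_segment' (C := M * h)
    (fun y _ => (h_deriv y).hasDerivWithinAt)
    (fun y hy => (h_lip y).trans <| by
      have : 0 ≤ M := (norm_nonneg _).trans (hM x)
      rw [Real.norm_of_nonneg (sub_nonneg.2 hy.1)]
      gcongr
      linarith [hy.2])
    (x + h) ⟨by linarith, le_rfl⟩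
  have h_eq : slopeError h f x
      = h⁻¹ • (f (x + h) - (x + h) • deriv f x - (f x - x • deriv f x)) := by
    rw [slopeError, ← sub_eq_zero]
    match_scalars <;> field
  rw [h_eq, norm_smul, norm_inv, Real.norm_of_nonneg hh.le, inv_mul_le_iff₀ hh]
  linarith

lemma tsupport_slopeError_subset (hh : 0 ≤ h) (hδ : h ≤ δ) :
    tsupport (slopeError h f) ⊆ Metric.cthickening δ (tsupport f) := by
  refine closure_minimal (fun x hx => ?_) Metric.isClosed_cthickening
  contrapose! hx
  have h_near {y : ℝ} (hy : dist x y ≤ δ) : y ∉ tsupport f := fun hmem =>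
    hx (Metric.mem_cthickening_of_dist_le x y δ _ hmem hy)
  have hx_f : x ∉ tsupport f := h_near (by simpa using hh.trans hδ)
  have hx_h : x + h ∉ tsupport f := h_near (by simpa [abs_of_nonneg hh] using hδ)
  simp [slopeError, image_eq_zero_of_notMem_tsupport hx_f, image_eq_zero_of_notMem_tsupport hx_h,
    image_eq_zero_of_notMem_tsupport fun hmem => hx_f (tsupport_deriv_subset hmem)]

end SlopeError

section TestFunctions

variable {f : ℝ → ℂ}

lemma tsupport_iteratedDeriv_subset {F : Type*} [NormedAddCommGroup F] [NormedSpace ℝ F]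
    (f : ℝ → F) (k : ℕ) : tsupport (iteratedDeriv k f) ⊆ tsupport f := by
  induction k with
  | zero => rw [iteratedDeriv_zero]
  | succ k ih => exact iteratedDeriv_succ (f := f) ▸ tsupport_deriv_subset.trans ih

lemma isTestPlus_of_tsupport_subset {K : Set ℝ} (hf : ContDiff ℝ (⊤ : ℕ∞) f) (hK : IsCompact K)
    (hK_pos : K ⊆ Set.Ioi 0) (hfK : tsupport f ⊆ K) : IsTestPlus f :=
  ⟨hf, hK.of_isClosed_subset (isClosed_tsupport f) hfK, hfK.trans hK_pos⟩

lemma isTestPlus_of_tsupport_subset_Icc {a b : ℝ} (ha : 0 < a) (hf : ContDiff ℝ (⊤ : ℕ∞) f)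
    (hf_supp : tsupport f ⊆ Set.Icc a b) : IsTestPlus f :=
  isTestPlus_of_tsupport_subset hf isCompact_Icc
    (Set.Icc_subset_Ici_self.trans (Set.Ici_subset_Ioi.2 ha)) hf_supp

protected lemma IsTestPlus.iteratedDeriv (hf : IsTestPlus f) (k : ℕ) :
    IsTestPlus (iteratedDeriv k f) :=
  isTestPlus_of_tsupport_subset (iteratedDeriv_eq_iterate (f := f) ▸ hf.1.iterate_deriv k)
    hf.2.1 hf.2.2 (tsupport_iteratedDeriv_subset f k)

protected lemma IsTestPlus.deriv (hf : IsTestPlus f) : IsTestPlus (deriv f) := by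
  simpa only [iteratedDeriv_one] using hf.iteratedDeriv 1

lemma IsTestPlus.exists_norm_le (hf : IsTestPlus f) : ∃ M, ∀ x, ‖f x‖ ≤ M :=
  hf.1.continuous.bounded_above_of_compact_support hf.2.1

lemma IsTestPlus.exists_pos_forall_lt_eq_zero (hf : IsTestPlus f) :
    ∃ δ > 0, ∀ x < δ, f x = 0 := by
  obtain ⟨δ, hδ, h_sub⟩ := hf.2.1.isCompact.exists_cthickening_subset_open isOpen_Ioi hf.2.2
  refine ⟨δ, hδ, fun x hx => image_eq_zero_of_notMem_tsupport fun hmem => ?_⟩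
  have : 0 < x - δ :=
    h_sub (Metric.mem_cthickening_of_dist_le (x - δ) x δ _ hmem (by simp [abs_of_pos hδ]))
  linarith

end TestFunctions

section Translations

variable {W : WHSpace} {T : W.E →L[ℂ] W.E} {u u' : W.E} {f : ℝ → ℂ}

lemma WHSpace.toFun_S_ae (hu : W.toFun u =ᵐ[volume] f) {a : ℝ} (hf : ∀ x < -a, f x = 0) :
    W.toFun (W.S a u) =ᵐ[volume] fun x => f (x - a) := by
  have hu_shift := (measurePreserving_sub_right volume a).quasiMeasurePreserving.ae_eq_comp hu
  filter_upwards [W.S_spec a u, hu_shift] with x hS hx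
  rw [hS, transFun]
  split_ifs with h0
  · exact hx
  · exact (hf _ (by linarith)).symm

lemma WHSpace.toFun_S_neg_ae (hu : W.toFun u =ᵐ[volume] f) {h : ℝ} (hf : ∀ x < h, f x = 0) :
    W.toFun (W.S (-h) u) =ᵐ[volume] fun x => f (x + h) := by
  simpa only [sub_neg_eq_add] using W.toFun_S_ae hu (a := -h) (by rwa [neg_neg])

lemma WHSpace.S_S_neg (hu : W.toFun u =ᵐ[volume] f) {h : ℝ} (hh : 0 ≤ h)
    (hf : ∀ x < h, f x = 0) : W.S h (W.S (-h) u) = u := by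
  refine W.inj _ _ ((W.toFun_S_ae (W.toFun_S_neg_ae hu hf) fun x hx => hf _ ?_).trans ?_)
  · linarith
  · simpa only [sub_add_cancel] using hu.symm

lemma IsWienerHopf.S_neg_apply (hT : IsWienerHopf W T) (hu : W.toFun u =ᵐ[volume] f) {h : ℝ}
    (hh : 0 ≤ h) (hf : ∀ x < h, f x = 0) : W.S (-h) (T u) = T (W.S (-h) u) := by
  simpa [W.S_S_neg hu hh hf] using congr($(hT h hh) (W.S (-h) u))

/-- `W.HasTranslationDeriv u u'` says that `u` belongs to the domain of the infinitesimal generator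
of the semigroup `(S_{-h})_{h ≥ 0}` of left translations, and that the generator maps `u`
to `u'`. -/
def WHSpace.HasTranslationDeriv (W : WHSpace) (u u' : W.E) : Prop :=
  Tendsto (fun h : ℝ => h⁻¹ • (W.S (-h) u - u)) (𝓝[>] 0) (𝓝 u')

lemma IsTestPlus.exists_norm_slope_sub_le (hf : IsTestPlus f) (hu : W.toFun u =ᵐ[volume] f)
    (hu' : W.toFun u' =ᵐ[volume] deriv f) :
    ∃ D : ℝ, ∀ᶠ h in 𝓝[>] (0 : ℝ), ‖h⁻¹ • (W.S (-h) u - u) - u'‖ ≤ h * D := by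
  obtain ⟨δ, hδ, h_sub⟩ := hf.2.1.isCompact.exists_cthickening_subset_open isOpen_Ioi hf.2.2
  obtain ⟨α, hα, hf_zero⟩ := hf.exists_pos_forall_lt_eq_zero
  have hK : IsCompact (Metric.cthickening δ (tsupport f)) := hf.2.1.isCompact.cthickening
  obtain ⟨C, hC, N, h_norm⟩ := W.test_cont _ hK
  choose M hM using fun k => (hf.iteratedDeriv k).exists_norm_le
  refine ⟨C * ∑ k ∈ Finset.range (N + 1), M (k + 2), ?_⟩
  filter_upwards [Ioc_mem_nhdsGT hδ, Ioc_mem_nhdsGT hα] with h hhδ hhα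
  have h_rep : W.toFun (h⁻¹ • (W.S (-h) u - u) - u') =ᵐ[volume] slopeError h f := by
    filter_upwards [W.toFun_S_neg_ae hu fun x hx => hf_zero x (hx.trans_le hhα.2), hu, hu']
      with x hSx hx hx'
    rw [map_sub, LinearMap.map_smul_of_tower, map_sub]
    simp only [Pi.sub_apply, Pi.smul_apply, hSx, hx, hx', slopeError]
  have h_supp := tsupport_slopeError_subset (f := f) hhδ.1.le hhδ.2
  have h_test := isTestPlus_of_tsupport_subset (contDiff_slopeError hf.1 h) hK h_sub h_supp
  refine (h_norm _ _ h_test h_supp h_rep).trans ?_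
  rw [mul_left_comm, Finset.mul_sum _ _ h]
  gcongr with k _
  have hk := (hf.iteratedDeriv k).1
  refine ciSup_le fun x => ?_
  rw [iteratedDeriv_slopeError hf.1]
  refine norm_slopeError_le (hk.differentiable (by simp))
    ((contDiff_infty_iff_deriv.1 hk).2.differentiable (by simp)) (fun y => ?_) hhδ.1 x
  simpa only [iteratedDeriv_succ] using hM (k + 2) y

lemma IsTestPlus.hasTranslationDeriv (hf : IsTestPlus f) (hu : W.toFun u =ᵐ[volume] f)
    (hu' : W.toFun u' =ᵐ[volume] deriv f) : W.HasTranslationDeriv u u' := by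
  obtain ⟨D, hD⟩ := hf.exists_norm_slope_sub_le hu hu'
  refine tendsto_iff_norm_sub_tendsto_zero.2
    (squeeze_zero' (.of_forall fun _ => norm_nonneg _) hD ?_)
  simpa using (tendsto_id.mul_const D).mono_left (nhdsWithin_le_nhds (a := (0 : ℝ)))

lemma IsWienerHopf.hasTranslationDeriv_apply (hT : IsWienerHopf W T) (hf : IsTestPlus f)
    (hu : W.toFun u =ᵐ[volume] f) (h_deriv : W.HasTranslationDeriv u u') :
    W.HasTranslationDeriv (T u) (T u') := by
  obtain ⟨δ, hδ, hf_zero⟩ := hf.exists_pos_forall_lt_eq_zero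
  refine ((T.continuous.tendsto u').comp h_deriv).congr' ?_
  filter_upwards [Ioc_mem_nhdsGT hδ] with h hh
  rw [hT.S_neg_apply hu hh.1.le fun x hx => hf_zero x (hx.trans_le hh.2), Function.comp_apply,
    ContinuousLinearMap.map_smul_of_tower, map_sub]

end Translations

section ContinuousRepresentatives

variable {W : WHSpace} {u v v' : W.E} {w w₁ w₂ : ℝ → ℂ}

/-- `w` is a continuous function whose restriction to `ℝ⁺` represents `u`; nothing is required
of `w` on the negative half-line. -/
structure WHSpace.IsContinuousRep (W : WHSpace) (u : W.E) (w : ℝ → ℂ) : Prop where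
  continuous : Continuous w
  ae_eq : W.toFun u =ᵐ[volume.restrict (Set.Ici 0)] w

namespace WHSpace.IsContinuousRep

lemma eqOn (h₁ : W.IsContinuousRep u w₁) (h₂ : W.IsContinuousRep u w₂) :
    Set.EqOn w₁ w₂ (Set.Ici 0) :=
  Measure.eqOn_of_ae_eq (h₁.ae_eq.symm.trans h₂.ae_eq) h₁.continuous.continuousOn
    h₂.continuous.continuousOn (by rw [interior_Ici, closure_Ioi])

lemma norm_le (h : W.IsContinuousRep u w) {X : ℝ} (hX : 0 < X) {B : ℝ}
    (hB : ∀ᵐ t ∂volume.restrict (Set.Icc 0 X), ‖W.toFun u t‖ ≤ B) :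
    ∀ t ∈ Set.Icc 0 X, ‖w t‖ ≤ B := by
  have h_min : (fun t => min ‖w t‖ B) =ᵐ[volume.restrict (Set.Icc 0 X)] fun t => ‖w t‖ := by
    filter_upwards [hB, ae_restrict_of_ae_restrict_of_subset Set.Icc_subset_Ici_self h.ae_eq]
      with t ht htw
    exact min_eq_left (htw ▸ ht)
  exact fun t ht => min_eq_left_iff.1 <| Measure.eqOn_Icc_of_ae_eq volume hX.ne h_min
    (h.continuous.norm.min continuous_const).continuousOn h.continuous.norm.continuousOn ht

lemma zero : W.IsContinuousRep 0 0 where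
  continuous := continuous_zero
  ae_eq := by rw [map_zero]

lemma add (h₁ : W.IsContinuousRep u w₁) (h₂ : W.IsContinuousRep v w₂) :
    W.IsContinuousRep (u + v) (w₁ + w₂) where
  continuous := h₁.continuous.add h₂.continuous
  ae_eq := by simpa only [map_add] using h₁.ae_eq.add h₂.ae_eq

lemma smul (h : W.IsContinuousRep u w) (c : ℂ) : W.IsContinuousRep (c • u) (c • w) where
  continuous := h.continuous.const_smul c
  ae_eq := by simpa only [map_smul] using h.ae_eq.const_smul c

lemma S_neg (h_rep : W.IsContinuousRep u w) {h : ℝ} (hh : 0 ≤ h) :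
    W.IsContinuousRep (W.S (-h) u) (fun x => w (x + h)) where
  continuous := h_rep.continuous.comp (continuous_id.add continuous_const)
  ae_eq := by
    have h_shift := (measurePreserving_add_right volume h).quasiMeasurePreserving.ae
      ((ae_restrict_iff' measurableSet_Ici).1 h_rep.ae_eq)
    filter_upwards [ae_restrict_mem measurableSet_Ici, ae_restrict_of_ae (W.S_spec (-h) u),
      ae_restrict_of_ae h_shift] with x (hx : 0 ≤ x) hS hxh
    rw [hS, transFun, if_pos hx, sub_neg_eq_add, hxh (add_nonneg hx hh)]

end WHSpace.IsContinuousRep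

lemma WHSpace.intervalIntegrable (u : W.E) (x y : ℝ) :
    IntervalIntegrable (W.toFun u) volume x y :=
  intervalIntegrable_iff.mpr <|
    ((W.locInt u).integrableOn_isCompact isCompact_uIcc).mono_set Set.uIoc_subset_uIcc

lemma WHSpace.exists_clm_eq_intervalIntegral (W : WHSpace) (x y : ℝ) :
    ∃ ℓ : W.E →L[ℂ] ℂ, ∀ v, ℓ v = ∫ t in x..y, W.toFun v t := by
  obtain ⟨C, -, hC⟩ := W.incl_cont (Set.uIcc x y) isCompact_uIcc
  let ℓ : W.E →ₗ[ℂ] ℂ :=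
    { toFun v := ∫ t in x..y, W.toFun v t
      map_add' u v := by
        rw [map_add]
        exact intervalIntegral.integral_add (W.intervalIntegrable u x y)
          (W.intervalIntegrable v x y)
      map_smul' c v := by
        rw [map_smul]
        exact intervalIntegral.integral_smul c (W.toFun v) }
  refine ⟨ℓ.mkContinuous C fun v => ?_, fun v => rfl⟩
  refine intervalIntegral.norm_integral_le_integral_norm_uIoc.trans
    ((setIntegral_mono_set ?_ (.of_forall fun _ => norm_nonneg _)
      Set.uIoc_subset_uIcc.eventuallyLE).trans (hC v))
  exact ((W.locInt v).integrableOn_isCompact isCompact_uIcc).norm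

lemma WHSpace.intervalIntegral_S_neg (v : W.E) (h : ℝ) {x y : ℝ} (hx : 0 ≤ x) (hy : 0 ≤ y) :
    ∫ t in x..y, W.toFun (W.S (-h) v) t = ∫ t in x + h..y + h, W.toFun v t := by
  rw [← intervalIntegral.integral_comp_add_right]
  refine intervalIntegral.integral_congr_ae ?_
  filter_upwards [W.S_spec (-h) v] with t hS ht
  rw [hS, transFun, if_pos ((le_min hx hy).trans ht.1.le), sub_neg_eq_add]

namespace WHSpace.HasTranslationDeriv

lemma sub_eq_integral (h_deriv : W.HasTranslationDeriv v v') {x y : ℝ} (hx : 0 ≤ x)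
    (hy : 0 ≤ y)
    (hvx : HasDerivAt (fun s => ∫ t in (0 : ℝ)..s, W.toFun v t) (W.toFun v x) x)
    (hvy : HasDerivAt (fun s => ∫ t in (0 : ℝ)..s, W.toFun v t) (W.toFun v y) y) :
    W.toFun v y - W.toFun v x = ∫ t in x..y, W.toFun v' t := by
  obtain ⟨ℓ, hℓ⟩ := W.exists_clm_eq_intervalIntegral x y
  have h_lim := (ℓ.continuous.tendsto v').comp h_deriv
  rw [hℓ] at h_lim
  refine tendsto_nhds_unique
    (hvy.tendsto_slope_zero_right.sub hvx.tendsto_slope_zero_right) (h_lim.congr fun h => ?_)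
  have h_int := W.intervalIntegrable v
  rw [Function.comp_apply, ContinuousLinearMap.map_smul_of_tower, map_sub, hℓ, hℓ,
    W.intervalIntegral_S_neg v h hx hy, ← smul_sub,
    ← intervalIntegral.integral_interval_sub_left (h_int 0 (y + h)) (h_int 0 (x + h)),
    ← intervalIntegral.integral_interval_sub_left (h_int 0 y) (h_int 0 x)]
  congr 1
  abel

lemma exists_isContinuousRep (h_deriv : W.HasTranslationDeriv v v') :
    ∃ w, W.IsContinuousRep v w ∧ ∀ x y, w y - w x = ∫ t in x..y, W.toFun v' t := by
  have h_int := W.intervalIntegrable v'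
  have h_diff : ∀ᵐ x, HasDerivAt (fun s => ∫ t in (0 : ℝ)..s, W.toFun v t) (W.toFun v x) x :=
    (LocallyIntegrable.ae_hasDerivAt_integral (W.locInt v)).mono fun x hx => hx 0
  have : NeBot (ae (volume.restrict (Set.Ici (0 : ℝ)))) :=
    ae_neBot.2 (by simp [Measure.restrict_eq_zero])
  obtain ⟨x₀, hx₀, hx₀_diff⟩ := ((ae_restrict_mem measurableSet_Ici).and
    (ae_restrict_of_ae (s := Set.Ici (0 : ℝ)) h_diff)).exists
  refine ⟨fun y => W.toFun v x₀ + ∫ t in x₀..y, W.toFun v' t,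
    ⟨continuous_const.add (intervalIntegral.continuous_primitive h_int x₀), ?_⟩, fun x y => ?_⟩
  · filter_upwards [ae_restrict_mem measurableSet_Ici, ae_restrict_of_ae h_diff] with y hy hy_diff
    rw [← h_deriv.sub_eq_integral hx₀ hy hx₀_diff hy_diff, add_sub_cancel]
  · rw [add_sub_add_left_eq_sub,
      intervalIntegral.integral_interval_sub_left (h_int x₀ y) (h_int x₀ x)]

end WHSpace.HasTranslationDeriv

lemma WHSpace.exists_ae_norm_le_of_hasTranslationDeriv (W : WHSpace) (X : ℝ) :
    ∃ C > 0, ∀ v v' : W.E, W.HasTranslationDeriv v v' →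
      ∀ᵐ t ∂volume.restrict (Set.Icc 0 X), ‖W.toFun v t‖ ≤ C * (‖v‖ + ‖v'‖) := by
  set J : Set ℝ := Set.Icc 0 (max X 1)
  obtain ⟨C, hC, h_incl⟩ := W.incl_cont J isCompact_Icc
  refine ⟨C, hC, fun v v' h_deriv => ?_⟩
  obtain ⟨w, hw, hw_sub⟩ := h_deriv.exists_isContinuousRep
  have h_setIntegral_le (z : W.E) {s : Set ℝ} (hs : s ⊆ J) :
      ∫ t in s, ‖W.toFun z t‖ ≤ C * ‖z‖ :=
    (setIntegral_mono_set ((W.locInt z).integrableOn_isCompact isCompact_Icc).norm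
      (.of_forall fun _ => norm_nonneg _) hs.eventuallyLE).trans (h_incl z)
  have h_unit_sub : Set.Icc 0 1 ⊆ J := Set.Icc_subset_Icc_right (le_max_right _ _)
  obtain ⟨s, hs, hws⟩ : ∃ s ∈ Set.Icc (0 : ℝ) 1, ‖w s‖ ≤ C * ‖v‖ := by
    obtain ⟨s, hs, hws⟩ := exists_le_setAverage (μ := volume) (s := Set.Icc (0 : ℝ) 1)
      (by simp) (by simp) hw.continuous.norm.integrableOn_Icc
    refine ⟨s, hs, (hws.trans_eq ?_).trans (h_setIntegral_le v h_unit_sub)⟩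
    rw [setAverage_eq, Real.volume_real_Icc_of_le zero_le_one, sub_zero, inv_one, one_smul]
    refine integral_congr_ae ?_
    filter_upwards [ae_restrict_of_ae_restrict_of_subset Set.Icc_subset_Ici_self hw.ae_eq]
      with t ht
    rw [ht]
  filter_upwards [ae_restrict_mem measurableSet_Icc,
    ae_restrict_of_ae_restrict_of_subset Set.Icc_subset_Ici_self hw.ae_eq] with t ht htw
  have htJ : t ∈ J := Set.Icc_subset_Icc_right (le_max_left _ _) ht
  calc ‖W.toFun v t‖ = ‖w s + ∫ r in s..t, W.toFun v' r‖ := by rw [htw, ← hw_sub, add_sub_cancel]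
    _ ≤ ‖w s‖ + ∫ r in Set.uIoc s t, ‖W.toFun v' r‖ :=
      (norm_add_le _ _).trans <|
        add_le_add_right intervalIntegral.norm_integral_le_integral_norm_uIoc _
    _ ≤ C * ‖v‖ + C * ‖v'‖ := by
      gcongr
      exact h_setIntegral_le v'
        (Set.uIoc_subset_uIcc.trans (Set.uIcc_subset_Icc (h_unit_sub hs) htJ))
    _ = C * (‖v‖ + ‖v'‖) := (mul_add _ _ _).symm

end ContinuousRepresentatives

section Modulation

variable {W : WHSpace} {T : W.E →L[ℂ] W.E}

lemma WHSpace.norm_toFun_Mod_ae (W : WHSpace) (ξ : ℝ) (u : W.E) :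
    ∀ᵐ x, ‖W.toFun (W.Mod ξ u) x‖ = ‖W.toFun u x‖ := by
  filter_upwards [W.Mod_spec ξ u] with x hx
  rw [hx, modFun, norm_mul, mul_assoc, ← ofReal_mul, norm_exp_I_mul_ofReal, one_mul]

lemma WHSpace.Mod_S (W : WHSpace) (ξ a : ℝ) (u : W.E) :
    W.Mod ξ (W.S a u) = exp (I * ξ * a) • W.S a (W.Mod ξ u) := by
  refine W.inj _ _ ?_
  have h_shift := (measurePreserving_sub_right volume a).quasiMeasurePreserving.ae
    (W.Mod_spec ξ u)
  filter_upwards [W.Mod_spec ξ (W.S a u), W.S_spec a u, W.S_spec a (W.Mod ξ u), h_shift]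
    with x h_mod_S hS hS_mod h_mod
  rw [map_smul, Pi.smul_apply, smul_eq_mul, h_mod_S, modFun, hS, hS_mod, transFun, transFun]
  split_ifs
  · rw [h_mod, modFun, ← mul_assoc, ← exp_add]
    congr 2
    push_cast
    ring
  · rw [mul_zero, mul_zero]

lemma IsWienerHopf.conj_Mod (hT : IsWienerHopf W T) (ξ : ℝ) :
    IsWienerHopf W ((W.Mod (-ξ)).comp (T.comp (W.Mod ξ))) := by
  intro a ha
  ext u
  have h_exp : exp (I * (-ξ : ℝ) * (-a : ℝ)) = exp (I * ξ * a) := by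
    push_cast
    ring_nf
  have h_conj := W.Mod_S (-ξ) (-a) (T (W.Mod ξ (W.S a u)))
  rw [h_exp, W.Mod_S ξ a u, map_smul, map_smul, map_smul,
    show W.S (-a) (T (W.S a (W.Mod ξ u))) = T (W.Mod ξ u) from
      congr($(hT a ha) (W.Mod ξ u))] at h_conj
  simp only [ContinuousLinearMap.comp_apply]
  rw [W.Mod_S ξ a u, map_smul]
  exact (smul_right_injective _ (exp_ne_zero _) h_conj).symm

lemma IsWienerHopf.exists_forall_ae_norm_apply_Mod_le (hT : IsWienerHopf W T) (X : ℝ) {u : W.E}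
    {f : ℝ → ℂ} (hf : IsTestPlus f) (hu : W.toFun u =ᵐ[volume] f) :
    ∃ B > 0, ∀ ξ, ∀ᵐ t ∂volume.restrict (Set.Icc 0 X), ‖W.toFun (T (W.Mod ξ u)) t‖ ≤ B := by
  obtain ⟨u', hu'⟩ := W.test_mem (deriv f) hf.deriv
  obtain ⟨C, hC, h_bound⟩ := W.exists_ae_norm_le_of_hasTranslationDeriv X
  obtain ⟨M, hM⟩ := W.Mod_bdd
  have hM_nonneg : 0 ≤ M := (norm_nonneg _).trans (hM 0)
  have h_conj_le (ξ : ℝ) (z : W.E) : ‖W.Mod (-ξ) (T (W.Mod ξ z))‖ ≤ M * (‖T‖ * (M * ‖z‖)) :=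
    (W.Mod (-ξ)).le_of_opNorm_le_of_le (hM _) <|
      T.le_opNorm_of_le ((W.Mod ξ).le_of_opNorm_le (hM _) z)
  refine ⟨C * (M * (‖T‖ * (M * ‖u‖)) + M * (‖T‖ * (M * ‖u'‖))) + 1, by positivity,
    fun ξ => ?_⟩
  filter_upwards [h_bound _ _ <|
      (hT.conj_Mod ξ).hasTranslationDeriv_apply hf hu (hf.hasTranslationDeriv hu hu'),
    ae_restrict_of_ae (W.norm_toFun_Mod_ae (-ξ) (T (W.Mod ξ u)))] with t h_le h_mod
  rw [← h_mod]
  refine h_le.trans (le_add_of_le_of_nonneg ?_ zero_le_one)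
  gcongr <;> exact h_conj_le ξ _

end Modulation

section AlmostEverywhereSums

variable {W : WHSpace} {ι : Type*} {V : W.E} {K : Set ℝ}

lemma WHSpace.exists_seq_tendsto_ae {l : Filter ι} [l.NeBot] [l.IsCountablyGenerated]
    {v : ι → W.E} (hv : Tendsto v l (𝓝 V)) (hK : IsCompact K) :
    ∃ ns : ℕ → ι, Tendsto ns atTop l ∧ ∀ᵐ x ∂volume.restrict K,
      Tendsto (fun k => W.toFun (v (ns k)) x) atTop (𝓝 (W.toFun V x)) := by
  obtain ⟨C, -, hC⟩ := W.incl_cont K hK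
  refine (tendstoInMeasure_of_tendsto_eLpNorm one_ne_zero (fun n => (W.meas _).restrict)
    (W.meas _).restrict ?_).exists_seq_tendsto_ae'
  have h_norm : Tendsto (fun n => ENNReal.ofReal (C * ‖v n - V‖)) l (𝓝 0) := by
    simpa only [mul_zero, ENNReal.ofReal_zero] using ENNReal.tendsto_ofReal
      ((tendsto_iff_norm_sub_tendsto_zero.1 hv).const_mul C)
  refine tendsto_of_tendsto_of_tendsto_of_le_of_le tendsto_const_nhds h_norm
    (fun _ => zero_le) fun n => ?_
  have h_int : IntegrableOn (W.toFun (v n - V)) K := (W.locInt _).integrableOn_isCompact hK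
  rw [← map_sub, eLpNorm_one_eq_lintegral_enorm, ← ofReal_integral_norm_eq_lintegral_enorm h_int]
  exact ENNReal.ofReal_le_ofReal (hC _)

lemma WHSpace.exists_seq_sum_tendsto_ae [Countable ι] {v : ι → W.E} (hv : HasSum v V)
    (hK : IsCompact K) :
    ∃ s : ℕ → Finset ι, Tendsto s atTop atTop ∧ ∀ᵐ x ∂volume.restrict K,
      Tendsto (fun k => ∑ i ∈ s k, W.toFun (v i) x) atTop (𝓝 (W.toFun V x)) := by
  simpa only [map_sum, Finset.sum_apply, SummationFilter.unconditional_filter] using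
    W.exists_seq_tendsto_ae hv hK

lemma WHSpace.ae_norm_le_tsum_of_hasSum [Countable ι] {v : ι → W.E} (hv : HasSum v V)
    (hK : IsCompact K) {b : ι → ℝ} (hb : Summable b)
    (hvb : ∀ i, ∀ᵐ x ∂volume.restrict K, ‖W.toFun (v i) x‖ ≤ b i) :
    ∀ᵐ x ∂volume.restrict K, ‖W.toFun V x‖ ≤ ∑' i, b i := by
  obtain ⟨s, -, h_lim⟩ := W.exists_seq_sum_tendsto_ae hv hK
  filter_upwards [h_lim, ae_all_iff.2 hvb] with x hx hxb
  refine le_of_tendsto hx.norm (.of_forall fun k => ?_)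
  exact (norm_sum_le_of_le _ fun i _ => hxb i).trans <|
    hb.sum_le_tsum _ fun i _ => (norm_nonneg _).trans (hxb i)

lemma WHSpace.toFun_ae_eq_of_hasSum [Countable ι] {v : ι → W.E} (hv : HasSum v V) {f : ℝ → ℂ}
    (hf : ∀ᵐ x, HasSum (fun i => W.toFun (v i) x) (f x)) : W.toFun V =ᵐ[volume] f := by
  rw [EventuallyEq, ← Measure.restrict_univ (μ := volume), ← iUnion_compactCovering ℝ,
    ae_restrict_iUnion_iff]
  intro n
  obtain ⟨s, hs, h_lim⟩ := W.exists_seq_sum_tendsto_ae hv (isCompact_compactCovering ℝ n)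
  filter_upwards [h_lim, ae_restrict_of_ae hf] with x hx hxf
  exact tendsto_nhds_unique hx (hxf.comp hs)

end AlmostEverywhereSums

section FourierSynthesis

variable {W : WHSpace} {T : W.E →L[ℂ] W.E} {a b : ℝ}

lemma exists_isTestPlus_eqOn_one {a' b' : ℝ} (ha' : 0 < a') (ha : a' < a) (hb : b < b') :
    ∃ χ : ℝ → ℂ, IsTestPlus χ ∧ Set.EqOn χ 1 (Set.Icc a b) ∧
      Function.support χ ⊆ Set.Ioo a' b' := by
  obtain ⟨φ, hφ, -, hφ_supp, hφ_one⟩ := exists_contMDiff_support_eq_eq_one_iff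
    (modelWithCornersSelf ℝ ℝ) (n := ⊤) isOpen_Ioo isClosed_Icc (Set.Icc_subset_Ioo ha hb)
  have h_supp : Function.support (fun x => (φ x : ℂ)) ⊆ Set.Ioo a' b' := fun x hx =>
    hφ_supp.subset (ofReal_ne_zero.1 hx)
  refine ⟨fun x => φ x, ?_, fun x hx => ofReal_eq_one.2 ((hφ_one x).1 hx), h_supp⟩
  exact isTestPlus_of_tsupport_subset_Icc ha' (ofRealCLM.contDiff.comp hφ.contDiff)
    (closure_minimal (h_supp.trans Set.Ioo_subset_Icc_self) isClosed_Icc)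

lemma WHSpace.hasSum_fourierCoeffOn_smul_Mod {f χ : ℝ → ℂ} {u U : W.E} (hab : a < b)
    (hf : ContinuousOn f (Set.Icc a b)) (hfab : f a = f b)
    (h_sum : Summable fun n => ‖fourierCoeffOn hab f n‖)
    (hχ : Function.support χ ⊆ Set.Icc a b) (hU : W.toFun U =ᵐ[volume] χ)
    (hu : W.toFun u =ᵐ[volume] f * χ) :
    HasSum (fun n : ℤ => fourierCoeffOn hab f n • W.Mod (2 * π * n / (b - a)) U) u := by
  obtain ⟨M, hM⟩ := W.Mod_bdd
  have h_summable :
      Summable fun n : ℤ => fourierCoeffOn hab f n • W.Mod (2 * π * n / (b - a)) U := by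
    refine .of_norm_bounded (h_sum.mul_right (M * ‖U‖)) fun n => ?_
    rw [norm_smul]
    gcongr
    exact (W.Mod _).le_of_opNorm_le (hM _) U
  have h_pointwise : ∀ᵐ x, HasSum (fun n : ℤ => W.toFun
      (fourierCoeffOn hab f n • W.Mod (2 * π * n / (b - a)) U) x) (f x * χ x) := by
    filter_upwards [hU, ae_all_iff.2 fun n : ℤ => W.Mod_spec (2 * π * n / (b - a)) U]
      with x hx h_mod
    simp only [map_smul, Pi.smul_apply, smul_eq_mul, h_mod, modFun, hx, ← mul_assoc]
    by_cases hxχ : χ x = 0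
    · simp only [hxχ, mul_zero, hasSum_zero]
    · exact (hasSum_fourierCoeffOn_mul_exp hab hf hfab h_sum.of_norm (hχ hxχ)).mul_right (χ x)
  have h_eq : ∑' n : ℤ, fourierCoeffOn hab f n • W.Mod (2 * π * n / (b - a)) U = u :=
    W.inj _ _ ((W.toFun_ae_eq_of_hasSum h_summable.hasSum h_pointwise).trans hu.symm)
  exact h_eq ▸ h_summable.hasSum

lemma WHSpace.ae_norm_apply_le_tsum_fourierCoeffOn {f χ : ℝ → ℂ} {u U : W.E} (hab : a < b)
    (hf : ContinuousOn f (Set.Icc a b)) (hfab : f a = f b)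
    (h_sum : Summable fun n => ‖fourierCoeffOn hab f n‖)
    (hχ : Function.support χ ⊆ Set.Icc a b) (hU : W.toFun U =ᵐ[volume] χ)
    (hu : W.toFun u =ᵐ[volume] f * χ) {K : Set ℝ} (hK : IsCompact K) {D : ℝ}
    (hD : ∀ ξ, ∀ᵐ t ∂volume.restrict K, ‖W.toFun (T (W.Mod ξ U)) t‖ ≤ D) :
    ∀ᵐ t ∂volume.restrict K, ‖W.toFun (T u) t‖ ≤ (∑' n, ‖fourierCoeffOn hab f n‖) * D := by
  rw [← tsum_mul_right]
  refine W.ae_norm_le_tsum_of_hasSum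
    (T.hasSum (W.hasSum_fourierCoeffOn_smul_Mod hab hf hfab h_sum hχ hU hu)) hK
    (h_sum.mul_right D) fun n => ?_
  filter_upwards [hD (2 * π * n / (b - a))] with t ht
  rw [map_smul, map_smul, Pi.smul_apply, norm_smul]
  gcongr

lemma IsWienerHopf.exists_forall_ae_norm_apply_le (hT : IsWienerHopf W T) (ha : 0 < a)
    (hab : a ≤ b) (X : ℝ) :
    ∃ C > 0, ∀ (u : W.E) (f : ℝ → ℂ) (A B : ℝ), ContDiff ℝ 1 f → tsupport f ⊆ Set.Icc a b →
      (∀ x, ‖f x‖ ≤ A) → (∀ x, ‖deriv f x‖ ≤ B) → W.toFun u =ᵐ[volume] f →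
      ∀ᵐ t ∂volume.restrict (Set.Icc 0 X), ‖W.toFun (T u) t‖ ≤ C * (A + B) := by
  have h_lt : a / 2 < b + 1 := by linarith
  obtain ⟨χ, hχ, hχ_one, hχ_supp⟩ :=
    exists_isTestPlus_eqOn_one (half_pos ha) (half_lt_self ha) (lt_add_one b)
  obtain ⟨U, hU⟩ := W.test_mem χ hχ
  obtain ⟨D, hD, h_mod⟩ := hT.exists_forall_ae_norm_apply_Mod_le X hχ hU
  set κ : ℝ := (b + 1 - a / 2) / (2 * π) * √(∑' n : ℤ, 1 / (n : ℝ) ^ 2)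
  have hκ : 0 ≤ κ := by
    have := sub_pos.2 h_lt
    positivity
  refine ⟨(1 + κ) * D, by positivity, fun u f A B hf hf_supp hA hB hu => ?_⟩
  have hA_nonneg : 0 ≤ A := (norm_nonneg _).trans (hA 0)
  have hB_nonneg : 0 ≤ B := (norm_nonneg _).trans (hB 0)
  have hf_zero {x : ℝ} (hx : x ∉ Set.Icc a b) : f x = 0 :=
    image_eq_zero_of_notMem_tsupport fun h => hx (hf_supp h)
  have hf_end : f (a / 2) = f (b + 1) := by
    rw [hf_zero fun h => (half_lt_self ha).not_ge h.1, hf_zero fun h => (lt_add_one b).not_ge h.2]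
  have hfχ : f = f * χ := by
    ext x
    by_cases hx : x ∈ Set.Icc a b
    · rw [Pi.mul_apply, hχ_one hx, Pi.one_apply, mul_one]
    · rw [Pi.mul_apply, hf_zero hx, zero_mul]
  obtain ⟨h_summable, h_tsum⟩ := tsum_norm_fourierCoeffOn_le h_lt
    (fun x _ => (hf.differentiable one_ne_zero x).hasDerivAt)
    (hf.continuous_deriv le_rfl).aestronglyMeasurable hf_end (fun x _ => hA x) (fun x _ => hB x)
  filter_upwards [W.ae_norm_apply_le_tsum_fourierCoeffOn h_lt hf.continuous.continuousOn hf_end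
    h_summable (hχ_supp.trans Set.Ioo_subset_Icc_self) hU (hfχ ▸ hu) isCompact_Icc h_mod] with t ht
  calc ‖W.toFun (T u) t‖ ≤ (∑' n, ‖fourierCoeffOn h_lt f n‖) * D := ht
    _ ≤ (A + κ * B) * D := by
      gcongr
      rwa [mul_assoc]
    _ ≤ ((1 + κ) * (A + B)) * D := by
      gcongr
      nlinarith
    _ = (1 + κ) * D * (A + B) := by ring

end FourierSynthesis

section Reflection

variable {g : ℝ → ℂ}

lemma norm_le_iSup_norm_of_hasCompactSupport (hg : Continuous g) (hg_supp : HasCompactSupport g)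
    (x : ℝ) : ‖g x‖ ≤ ⨆ y, ‖g y‖ :=
  le_ciSup (hg.norm.bddAbove_range_of_hasCompactSupport hg_supp.norm) x

lemma IsTest.comp_const_sub (hg : IsTest g) (a : ℝ) : IsTest fun y => g (a - y) :=
  ⟨hg.1.comp (contDiff_const.sub contDiff_id),
    hg.2.comp_homeomorph (Homeomorph.subLeft a)⟩

lemma tsupport_comp_const_sub_subset (a : ℝ) {α β : ℝ} (hg : tsupport g ⊆ Set.Icc α β) :
    tsupport (fun y => g (a - y)) ⊆ Set.Icc (a - β) (a - α) := by
  intro y hy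
  have h_mem := hg (tsupport_comp_subset_preimage g (continuous_const.sub continuous_id) hy)
  exact ⟨sub_le_comm.1 h_mem.2, le_sub_comm.1 h_mem.1⟩

lemma IsTest.eventually_isTestPlus_comp_const_sub (hg : IsTest g) :
    ∀ᶠ a in atTop, IsTestPlus fun y => g (a - y) := by
  obtain ⟨R, hR⟩ := hg.2.isBounded.subset_closedBall 0
  rw [Real.closedBall_eq_Icc] at hR
  filter_upwards [eventually_gt_atTop (0 + R)] with a ha
  exact isTestPlus_of_tsupport_subset_Icc (sub_pos.2 ha) (hg.comp_const_sub a).1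
    (tsupport_comp_const_sub_subset a hR)

end Reflection

section ConvolutionGraph

variable {W : WHSpace} {T : W.E →L[ℂ] W.E} {u : W.E} {w f g : ℝ → ℂ}

lemma exists_linearMap_eq_of_mem {k V V' : Type*} [Field k] [AddCommGroup V] [Module k V]
    [AddCommGroup V'] [Module k V'] {G : Submodule k (V × V')}
    (hG : ∀ p ∈ G, p.1 = 0 → p.2 = 0) : ∃ φ : V →ₗ[k] V', ∀ p ∈ G, φ p.1 = p.2 := by
  obtain ⟨φ, hφ⟩ := G.toLinearPMap.toFun.exists_extend
  refine ⟨φ, fun p hp => ?_⟩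
  let x : G.toLinearPMap.domain := ⟨p.1, p, hp, rfl⟩
  have h_graph := G.sub_mem (Submodule.mem_graph_toLinearPMap hG x) hp
  have h_val := sub_eq_zero.1 (hG _ h_graph (sub_self p.1))
  rw [← h_val]
  exact congr($hφ x)

/-- The graph of the functional `μ_T` on functions `g` with support bounded above: the pairs
`(g, c)` such that, for all large `a`, the function `y ↦ g (a - y)` lies in `E` and its image
under `T` has a continuous representative with value `c` at `a`. -/
def WHSpace.convolutionGraph (W : WHSpace) (T : W.E →L[ℂ] W.E) : Submodule ℂ ((ℝ → ℂ) × ℂ) where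
  carrier := {p | ∀ᶠ a in atTop, ∃ u w, W.toFun u =ᵐ[volume] (fun y => p.1 (a - y)) ∧
    W.IsContinuousRep (T u) w ∧ w a = p.2}
  zero_mem' := .of_forall fun a => ⟨0, 0, by simp [Pi.zero_def], by simpa using .zero, rfl⟩
  add_mem' hp hq := by
    filter_upwards [hp, hq]
    rintro a ⟨u, w, hu, hw, hwa⟩ ⟨v, z, hv, hz, hza⟩
    refine ⟨u + v, w + z, ?_, ?_, congr_arg₂ (· + ·) hwa hza⟩
    · rw [map_add]
      exact hu.add hv
    · rw [map_add]
      exact hw.add hz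
  smul_mem' k p hp := by
    filter_upwards [hp]
    rintro a ⟨u, w, hu, hw, hwa⟩
    refine ⟨k • u, k • w, ?_, ?_, congr_arg (k * ·) hwa⟩
    · rw [map_smul]
      exact hu.const_smul k
    · rw [map_smul]
      exact hw.smul k

lemma WHSpace.eq_zero_of_mem_convolutionGraph {p : (ℝ → ℂ) × ℂ} (hp : p ∈ W.convolutionGraph T)
    (hp₁ : p.1 = 0) : p.2 = 0 := by
  obtain ⟨a, ⟨u, w, hu, hw, hwa⟩, ha⟩ := (hp.and (eventually_ge_atTop 0)).exists
  have hu_zero : u = 0 := W.inj _ _ <| hu.trans <| by simp [hp₁, Pi.zero_def]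
  rw [hu_zero, map_zero] at hw
  exact hwa ▸ hw.eqOn .zero ha

lemma IsWienerHopf.exists_isContinuousRep_apply (hT : IsWienerHopf W T) (hf : IsTestPlus f)
    (hu : W.toFun u =ᵐ[volume] f) : ∃ w, W.IsContinuousRep (T u) w := by
  obtain ⟨u', hu'⟩ := W.test_mem (deriv f) hf.deriv
  obtain ⟨w, hw, -⟩ := (hT.hasTranslationDeriv_apply hf hu
    (hf.hasTranslationDeriv hu hu')).exists_isContinuousRep
  exact ⟨w, hw⟩

lemma IsWienerHopf.mem_convolutionGraph (hT : IsWienerHopf W T) (hg : IsTest g) {a : ℝ}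
    (ha : 0 ≤ a) (hga : ∀ y < 0, g (a - y) = 0) (hu : W.toFun u =ᵐ[volume] fun y => g (a - y))
    (hw : W.IsContinuousRep (T u) w) : (g, w a) ∈ W.convolutionGraph T := by
  filter_upwards [hg.eventually_isTestPlus_comp_const_sub, eventually_ge_atTop a] with b hgb hab
  obtain ⟨v, hv⟩ := W.test_mem _ hgb
  obtain ⟨z, hz⟩ := hT.exists_isContinuousRep_apply hgb hv
  refine ⟨v, z, hv, hz, ?_⟩
  have hh : 0 ≤ b - a := sub_nonneg.2 hab
  have hgb_zero : ∀ y < b - a, g (b - y) = 0 := fun y hy => by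
    rw [show b - y = a - (y - (b - a)) by ring]
    exact hga _ (sub_neg.2 hy)
  have h_shift : W.S (-(b - a)) v = u := by
    refine W.inj _ _ <|
      (W.toFun_S_neg_ae hv hgb_zero).trans (.trans (.of_forall fun y => ?_) hu.symm)
    change g (b - (y + (b - a))) = g (a - y)
    congr 1
    ring
  have h_rep := hz.S_neg hh
  rw [hT.S_neg_apply hv hh hgb_zero, h_shift] at h_rep
  simpa using h_rep.eqOn hw ha

lemma IsWienerHopf.exists_forall_norm_le (hT : IsWienerHopf W T) {K : Set ℝ} (hK : IsCompact K) :
    ∃ C > 0, ∀ g, IsTest g → tsupport g ⊆ K → ∃ c, (g, c) ∈ W.convolutionGraph T ∧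
      ‖c‖ ≤ C * ((⨆ x, ‖g x‖) + ⨆ x, ‖deriv g x‖) := by
  obtain ⟨R, hR, hKR⟩ := hK.isBounded.subset_closedBall_lt 0 0
  rw [Real.closedBall_eq_Icc, zero_sub, zero_add] at hKR
  have hX : 0 < R + 1 := by linarith
  obtain ⟨C, hC, h_bound⟩ := hT.exists_forall_ae_norm_apply_le one_pos
    (show (1 : ℝ) ≤ 2 * R + 1 by linarith) (R + 1)
  refine ⟨C, hC, fun g hg hgK => ?_⟩
  have h_supp : tsupport (fun y => g (R + 1 - y)) ⊆ Set.Icc 1 (2 * R + 1) :=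
    (tsupport_comp_const_sub_subset (R + 1) (hgK.trans hKR)).trans_eq (by congr 1 <;> ring)
  have h_test : IsTestPlus fun y => g (R + 1 - y) :=
    isTestPlus_of_tsupport_subset_Icc one_pos (hg.comp_const_sub _).1 h_supp
  obtain ⟨u, hu⟩ := W.test_mem _ h_test
  obtain ⟨w, hw⟩ := hT.exists_isContinuousRep_apply h_test hu
  have h_zero : ∀ y < 0, g (R + 1 - y) = 0 := fun y hy =>
    image_eq_zero_of_notMem_tsupport (f := fun y => g (R + 1 - y))
      fun h => (h_test.2.2 h).not_gt hy
  refine ⟨w (R + 1), hT.mem_convolutionGraph hg hX.le h_zero hu hw, ?_⟩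
  refine hw.norm_le hX (h_bound u _ _ _ (h_test.1.of_le (by simp)) h_supp (fun x => ?_)
    (fun x => ?_) hu) _ (Set.right_mem_Icc.2 hX.le)
  · exact norm_le_iSup_norm_of_hasCompactSupport hg.1.continuous hg.2 _
  · rw [deriv_comp_const_sub, norm_neg]
    exact norm_le_iSup_norm_of_hasCompactSupport (hg.1.continuous_deriv (by simp)) hg.2.deriv _

end ConvolutionGraph

/-- Every Wiener-Hopf operator `T` is given by convolution with a
distribution `μ_T` of order `1`: `T f = P⁺ (μ_T ∗ f)` for `f ∈ C_c^∞((0,∞))`. -/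
theorem wienerHopf_distribution (W : WHSpace) (T : W.E →L[ℂ] W.E)
    (hT : IsWienerHopf W T) :
    ∃ μ : (ℝ → ℂ) →ₗ[ℂ] ℂ,
      (∀ K : Set ℝ, IsCompact K → ∃ C > 0, ∀ g : ℝ → ℂ, IsTest g → tsupport g ⊆ K →
        ‖μ g‖ ≤ C * ((⨆ x : ℝ, ‖g x‖) + ⨆ x : ℝ, ‖deriv g x‖)) ∧
      ∀ (f : W.E) (g : ℝ → ℂ), IsTestPlus g → W.toFun f =ᵐ[volume] g →
        ∀ᵐ x ∂(volume.restrict (Set.Ici (0 : ℝ))),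
          W.toFun (T f) x = μ (fun z => g (x - z)) := by
  obtain ⟨μ, hμ⟩ := exists_linearMap_eq_of_mem (G := W.convolutionGraph T)
    fun _ => W.eq_zero_of_mem_convolutionGraph
  refine ⟨μ, fun K hK => ?_, fun f g hg hf => ?_⟩
  · obtain ⟨C, hC, h_bound⟩ := hT.exists_forall_norm_le hK
    refine ⟨C, hC, fun g hg hgK => ?_⟩
    obtain ⟨c, hc, hc_le⟩ := h_bound g hg hgK
    rwa [hμ _ hc]
  · obtain ⟨w, hw⟩ := hT.exists_isContinuousRep_apply hg hf
    filter_upwards [hw.ae_eq, ae_restrict_mem measurableSet_Ici] with x hwx hx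
    have h_zero : ∀ y < 0, g (x - (x - y)) = 0 := fun y hy => by
      rw [sub_sub_cancel]
      exact image_eq_zero_of_notMem_tsupport fun h => (hg.2.2 h).not_gt hy
    rw [hwx, hμ _ (hT.mem_convolutionGraph (IsTest.comp_const_sub ⟨hg.1, hg.2.1⟩ x) hx h_zero
      (by simpa only [sub_sub_cancel] using hf) hw)]
end
end

section
/- Let E be a complex Banach space of functions on ℝ⁺ satisfying (H1), (H2), (H3), and let H be a nonzero separable complex Hilbert space. Then the subspace C_c^∞((0,∞)) ⊗ H of finite sums Σ φ_i u_i (φ_i ∈ C_c^∞((0,∞)), u_i ∈ H) is dense in Ē. -/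
open Complex Filter Topology

noncomputable section

/-- Elements of the algebraic tensor product `C_c^∞((0,∞)) ⊗ H`: finite sums
`Σ φ_i u_i` with `φ_i ∈ C_c^∞((0,∞))` and `u_i ∈ H`. -/
def IsTestPlusH {H : Type*} [AddCommGroup H] [Module ℂ H] (G : ℝ → H) : Prop :=
  ∃ (n : ℕ) (φ : Fin n → ℝ → ℂ) (u : Fin n → H),
    (∀ i, IsTestPlus (φ i)) ∧ G = fun x => ∑ i, φ i x • u i

/-- The Banach space `Ē` of (a.e.-equivalence classes of) measurable functions
`F : ℝ⁺ → H` such that `x ↦ ‖F x‖_H` belongs to `E`, with norm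
`‖F‖_Ē = ‖ x ↦ ‖F x‖_H ‖_E`, together with the translations `𝐒_a` acting on it. -/
structure WHSpaceH (W : WHSpace) (H : Type)
    [NormedAddCommGroup H] [InnerProductSpace ℂ H] where
  /-- the carrier Banach space -/
  Eb : Type
  [nacg : NormedAddCommGroup Eb]
  [nsp : NormedSpace ℂ Eb]
  [cpl : CompleteSpace Eb]
  /-- the realization of elements of `Ē` as `H`-valued functions on `ℝ⁺`; two elements
  coincide iff their realizations agree almost everywhere -/
  toFun : Eb →ₗ[ℂ] (ℝ → H)
  inj : ∀ F G : Eb, toFun F =ᵐ[MeasureTheory.volume] toFun G → F = G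
  meas : ∀ F : Eb, MeasureTheory.AEStronglyMeasurable (toFun F) MeasureTheory.volume
  supp : ∀ F : Eb, ∀ᵐ x ∂MeasureTheory.volume, x < 0 → toFun F x = 0
  /-- for `F ∈ Ē`, the function `x ↦ ‖F x‖_H` belongs to `E` -/
  norm_mem : ∀ F : Eb, ∃ e : W.E,
    W.toFun e =ᵐ[MeasureTheory.volume] fun x => (‖toFun F x‖ : ℂ)
  /-- the norm of `Ē`: `‖F‖_Ē = ‖ x ↦ ‖F x‖_H ‖_E` -/
  norm_eq : ∀ (F : Eb) (e : W.E),
    (W.toFun e =ᵐ[MeasureTheory.volume] fun x => (‖toFun F x‖ : ℂ)) → ‖F‖ = ‖e‖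
  /-- `Ē` consists of all measurable `G : ℝ⁺ → H` with `(x ↦ ‖G x‖_H) ∈ E` -/
  mem_of_norm : ∀ G : ℝ → H, MeasureTheory.AEStronglyMeasurable G MeasureTheory.volume →
    (∀ᵐ x ∂MeasureTheory.volume, x < 0 → G x = 0) →
    (∃ e : W.E, W.toFun e =ᵐ[MeasureTheory.volume] fun x => (‖G x‖ : ℂ)) →
    ∃ F : Eb, toFun F =ᵐ[MeasureTheory.volume] G
  /-- `C_c^∞((0,∞)) ⊗ H ⊆ Ē` -/
  tensor_mem : ∀ G : ℝ → H, IsTestPlusH G → ∃ F : Eb, toFun F =ᵐ[MeasureTheory.volume] G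
  /-- the translations `𝐒_a`, `a ∈ ℝ`, act boundedly on `Ē` -/
  SH : ℝ → Eb →L[ℂ] Eb
  SH_spec : ∀ (a : ℝ) (F : Eb),
    toFun (SH a F) =ᵐ[MeasureTheory.volume] transFun a (toFun F)

attribute [instance] WHSpaceH.nacg WHSpaceH.nsp WHSpaceH.cpl

open MeasureTheory

/-- A Wiener-Hopf operator on `Ē`: a bounded operator `𝐓` with `𝐒_{-a} 𝐓 𝐒_a = 𝐓`
for all `a ≥ 0`. -/
def IsWienerHopfH {W : WHSpace} {H : Type} [NormedAddCommGroup H] [InnerProductSpace ℂ H]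
    (V : WHSpaceH W H) (T : V.Eb →L[ℂ] V.Eb) : Prop :=
  ∀ a : ℝ, 0 ≤ a → (V.SH (-a)).comp (T.comp (V.SH a)) = T

/-!
The topology of test functions is separable, so `E` is separable. This forces the norm of `Ē` to be
absolutely continuous: if disjoint pieces `𝟙_{B k} F` of some `F ∈ Ē` stayed bounded below by `δ`,
then, indexing them by the rationals, the functions `‖𝟙_{C t} F‖_H` with `C t = ⋃ q < t, B q` would
be uncountably many points of `E` at mutual distance at least `δ`. Absolute continuity of the norm
gives dominated convergence in `Ē`. Consequently the closure of the tensor product contains first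
the products of its elements with indicators of open sets (as limits of smooth cut-offs), then with
indicators of Borel sets, then the simple functions cut off to compact subsets of `(0, ∞)`, and
finally all of `Ē`.
-/

/-! ### Separability in metric spaces -/

theorem countable_of_pairwise_le_dist {X κ : Type*} [PseudoMetricSpace X]
    [TopologicalSpace.SeparableSpace X] {δ : ℝ} (hδ : 0 < δ) {e : κ → X}
    (he : Pairwise fun s t => δ ≤ dist (e s) (e t)) : Countable κ := by
  have hdisj : Pairwise fun s t =>
      Disjoint (Metric.ball (e s) (δ / 2)) (Metric.ball (e t) (δ / 2)) := fun s t hst =>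
    Metric.ball_disjoint_ball (by simpa only [add_halves] using he hst)
  exact hdisj.countable_of_isOpen_disjoint (fun _ => Metric.isOpen_ball)
    fun s => ⟨e s, Metric.mem_ball_self (half_pos hδ)⟩

theorem separableSpace_of_antilipschitzWith {X Y : Type*} [MetricSpace X] [PseudoMetricSpace Y]
    [SecondCountableTopology Y] {c : NNReal} {J : X → Y} (hJ : AntilipschitzWith c J) :
    TopologicalSpace.SeparableSpace X := by
  have hsurj : Function.Surjective (Set.rangeFactorization J) := Set.rangeFactorization_surjective
  have hright : Function.RightInverse (Function.surjInv hsurj) (Set.rangeFactorization J) :=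
    Function.rightInverse_surjInv hsurj
  have hanti : AntilipschitzWith c (Set.rangeFactorization J) := hJ
  have hleft : Function.LeftInverse (Function.surjInv hsurj) (Set.rangeFactorization J) :=
    hright.leftInverse_of_injective hanti.injective
  exact hleft.surjective.denseRange.separableSpace (hanti.to_rightInverse hright).continuous

/-! ### Solid function spaces -/

theorem exists_antitone_measurableSet_le_of_eventually_le {α : Type*} [MeasurableSpace α]
    {β : Type*} [LinearOrder β] [TopologicalSpace β] [OrderClosedTopology β]
    [SecondCountableTopology β] [MeasurableSpace β] [OpensMeasurableSpace β] {μ : Measure α}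
    {g : ℕ → α → β} {d : α → β} (hg : ∀ n, AEMeasurable (g n) μ)
    (hd : AEMeasurable d μ) (h : ∀ᵐ x ∂μ, ∀ᶠ n in atTop, g n x ≤ d x) :
    ∃ A : ℕ → Set α, (∀ n, MeasurableSet (A n)) ∧ Antitone A ∧ (∀ᵐ x ∂μ, ∃ n, x ∉ A n) ∧
      ∀ n, ∀ᵐ x ∂μ, x ∉ A n → g n x ≤ d x := by
  have hmk : ∀ᵐ x ∂μ, d x = hd.mk d x ∧ ∀ n, g n x = (hg n).mk (g n) x :=
    hd.ae_eq_mk.and (ae_all_iff.2 fun n => (hg n).ae_eq_mk)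
  refine ⟨fun n => ⋃ j ≥ n, {x | hd.mk d x < (hg j).mk (g j) x}, fun n => ?_, ?_, ?_, fun n => ?_⟩
  · exact .biUnion (Set.to_countable _) fun j _ =>
      measurableSet_lt hd.measurable_mk (hg j).measurable_mk
  · exact fun n m hnm => Set.biUnion_subset_biUnion_left fun j (hj : m ≤ j) => hnm.trans hj
  · filter_upwards [h, hmk] with x hx ⟨hdx, hgx⟩
    obtain ⟨n, hn⟩ := eventually_atTop.1 hx
    refine ⟨n, ?_⟩
    simpa only [Set.mem_iUnion, Set.mem_ofPred_eq, not_exists, not_lt, ← hdx, ← hgx] using hn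
  · filter_upwards [hmk] with x ⟨hdx, hgx⟩ hxA
    simp only [Set.mem_iUnion, Set.mem_ofPred_eq, not_exists, not_lt, ← hdx, ← hgx] at hxA
    exact hxA n le_rfl

/-- The injective linear map `ι` realizes the normed space `X` as a solid space of classes of
a.e. strongly measurable functions: a function dominated in norm by (the realization of) `F`
is realized in `X`, with norm at most `‖F‖`. -/
structure IsSolidRealization {α 𝕜 X H : Type*} [MeasurableSpace α] [RCLike 𝕜]
    [NormedAddCommGroup X] [NormedSpace 𝕜 X] [NormedAddCommGroup H] [NormedSpace 𝕜 H]
    (μ : Measure α) (ι : X →ₗ[𝕜] α → H) : Prop where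
  eq_of_ae_eq {F G : X} : ι F =ᵐ[μ] ι G → F = G
  aestronglyMeasurable (F : X) : AEStronglyMeasurable (ι F) μ
  exists_of_norm_le (F : X) {G : α → H} : AEStronglyMeasurable G μ →
    (∀ᵐ x ∂μ, ‖G x‖ ≤ ‖ι F x‖) → ∃ F' : X, ι F' =ᵐ[μ] G ∧ ‖F'‖ ≤ ‖F‖

namespace IsSolidRealization

variable {α 𝕜 X H : Type*} [MeasurableSpace α] [RCLike 𝕜] [NormedAddCommGroup X]
  [NormedSpace 𝕜 X] [NormedAddCommGroup H] [NormedSpace 𝕜 H] {μ : Measure α}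
  {ι : X →ₗ[𝕜] α → H} {A B : Set α}

theorem norm_le_norm (h : IsSolidRealization μ ι) {F G : X} (hGF : ∀ᵐ x ∂μ, ‖ι G x‖ ≤ ‖ι F x‖) :
    ‖G‖ ≤ ‖F‖ := by
  obtain ⟨F', hF', hnorm⟩ := h.exists_of_norm_le F (h.aestronglyMeasurable G) hGF
  rwa [h.eq_of_ae_eq hF'] at hnorm

theorem exists_ae_eq_indicator (h : IsSolidRealization μ ι) (hA : MeasurableSet A) (F : X) :
    ∃ F' : X, ι F' =ᵐ[μ] A.indicator (ι F) :=
  (h.exists_of_norm_le F ((h.aestronglyMeasurable F).indicator hA)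
    (ae_of_all μ fun _ => norm_indicator_le_norm_self _ _)).imp fun _ => And.left

/-- The element of `X` realized by `𝟙_A · ι F`. -/
def restrict (h : IsSolidRealization μ ι) (hA : MeasurableSet A) (F : X) : X :=
  (h.exists_ae_eq_indicator hA F).choose

theorem coe_restrict (h : IsSolidRealization μ ι) (hA : MeasurableSet A) (F : X) :
    ι (h.restrict hA F) =ᵐ[μ] A.indicator (ι F) :=
  (h.exists_ae_eq_indicator hA F).choose_spec

theorem norm_restrict_le_of_subset (h : IsSolidRealization μ ι) (hA : MeasurableSet A)
    (hB : MeasurableSet B) (hAB : A ⊆ B) (F : X) : ‖h.restrict hA F‖ ≤ ‖h.restrict hB F‖ := by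
  refine h.norm_le_norm ?_
  filter_upwards [h.coe_restrict hA F, h.coe_restrict hB F] with x hxA hxB
  rw [hxA, hxB]
  exact norm_indicator_le_of_subset hAB _ _

theorem restrict_diff (h : IsSolidRealization μ ι) (hA : MeasurableSet A) (hB : MeasurableSet B)
    (hAB : A ⊆ B) (F : X) :
    h.restrict (hB.diff hA) F = h.restrict hB F - h.restrict hA F := by
  refine h.eq_of_ae_eq ?_
  rw [map_sub]
  filter_upwards [h.coe_restrict (hB.diff hA) F, h.coe_restrict hB F, h.coe_restrict hA F]
    with x hxD hxB hxA
  rw [hxD, Pi.sub_apply, hxB, hxA, Set.indicator_sdiff hAB, Pi.sub_apply]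

theorem restrict_compl (h : IsSolidRealization μ ι) (hA : MeasurableSet A) (F : X) :
    h.restrict hA.compl F = F - h.restrict hA F := by
  refine h.eq_of_ae_eq ?_
  rw [map_sub]
  filter_upwards [h.coe_restrict hA.compl F, h.coe_restrict hA F] with x hxC hxA
  rw [hxC, Pi.sub_apply, hxA, Set.indicator_compl, Pi.sub_apply]

/-- `F` has absolutely continuous norm: `‖𝟙_{A n} F‖ → 0` whenever the measurable sets `A n`
decrease to a null set. -/
def HasAbsolutelyContinuousNorm (h : IsSolidRealization μ ι) (F : X) : Prop :=
  ∀ (A : ℕ → Set α) (hA : ∀ n, MeasurableSet (A n)), Antitone A → (∀ᵐ x ∂μ, ∃ n, x ∉ A n) →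
    Tendsto (fun n => ‖h.restrict (hA n) F‖) atTop (𝓝 0)

theorem eq_zero_of_tendsto_restrict (h : IsSolidRealization μ ι) {A : ℕ → Set α}
    (hA : ∀ n, MeasurableSet (A n)) (hanti : Antitone A) (hnull : ∀ᵐ x ∂μ, ∃ n, x ∉ A n) {F G : X}
    (hG : Tendsto (fun n => h.restrict (hA n) F) atTop (𝓝 G)) : G = 0 := by
  have hcompl (m : ℕ) : h.restrict (hA m).compl G = 0 := by
    refine norm_le_zero_iff.1 (ge_of_tendsto (tendsto_iff_norm_sub_tendsto_zero.1 hG) ?_)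
    filter_upwards [eventually_ge_atTop m] with n hn
    refine h.norm_le_norm ?_
    rw [map_sub]
    filter_upwards [h.coe_restrict (hA m).compl G, h.coe_restrict (hA n) F] with x hxG hxF
    rw [hxG, Pi.sub_apply, hxF]
    by_cases hx : x ∈ A m
    · rw [Set.indicator_of_notMem (not_not_intro hx), norm_zero]
      exact norm_nonneg _
    · rw [Set.indicator_of_mem (by exact hx), Set.indicator_of_notMem fun hn' => hx (hanti hn hn'),
        zero_sub, norm_neg]
  refine h.eq_of_ae_eq ?_
  have hvanish : ∀ᵐ x ∂μ, ∀ m, (A m)ᶜ.indicator (ι G) x = 0 := ae_all_iff.2 fun m => by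
    filter_upwards [h.coe_restrict (hA m).compl G] with x hx
    rw [← hx, hcompl m, map_zero, Pi.zero_apply]
  filter_upwards [hnull, hvanish] with x ⟨m, hm⟩ hx
  rw [map_zero, Pi.zero_apply, ← hx m, Set.indicator_of_mem (by exact hm)]

theorem cauchySeq_restrict (h : IsSolidRealization μ ι) {A : ℕ → Set α}
    (hA : ∀ n, MeasurableSet (A n)) (hanti : Antitone A) {F : X}
    (hF : ∀ (B : ℕ → Set α) (hB : ∀ k, MeasurableSet (B k)), Pairwise (Function.onFun Disjoint B) →
      ∀ δ > 0, ∃ k, ‖h.restrict (hB k) F‖ < δ) :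
    CauchySeq fun n => h.restrict (hA n) F := by
  by_contra hnot
  rw [Metric.cauchySeq_iff'] at hnot
  push Not at hnot
  obtain ⟨δ, hδ, hfar⟩ := hnot
  choose next hnext hdist using hfar
  let m : ℕ → ℕ := fun k => next^[k] 0
  have hm_succ (k : ℕ) : m (k + 1) = next (m k) := Function.iterate_succ_apply' next k 0
  have hm : Monotone m := monotone_nat_of_le_succ fun k => (hm_succ k).symm ▸ hnext _
  have hdisj : Pairwise (Function.onFun Disjoint fun k => A (m k) \ A (m (k + 1))) :=
    (pairwise_disjoint_on _).2 fun i j hij => Set.disjoint_left.2 fun x hxi hxj =>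
      hxi.2 (hanti (hm hij) hxj.1)
  obtain ⟨k, hk⟩ := hF _ (fun k => (hA (m k)).diff (hA (m (k + 1)))) hdisj δ hδ
  rw [h.restrict_diff (hA _) (hA _) (hanti (hm k.le_succ)), ← dist_eq_norm, dist_comm, hm_succ]
    at hk
  exact (hdist (m k)).not_gt hk

theorem hasAbsolutelyContinuousNorm_of_exists_norm_restrict_lt [CompleteSpace X]
    (h : IsSolidRealization μ ι) {F : X}
    (hF : ∀ (B : ℕ → Set α) (hB : ∀ k, MeasurableSet (B k)), Pairwise (Function.onFun Disjoint B) →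
      ∀ δ > 0, ∃ k, ‖h.restrict (hB k) F‖ < δ) :
    h.HasAbsolutelyContinuousNorm F := by
  intro A hA hanti hnull
  obtain ⟨G, hG⟩ := cauchySeq_tendsto_of_complete (h.cauchySeq_restrict hA hanti hF)
  rw [h.eq_zero_of_tendsto_restrict hA hanti hnull hG] at hG
  exact tendsto_zero_iff_norm_tendsto_zero.1 hG

theorem norm_le_norm_restrict_add (h : IsSolidRealization μ ι) (hA : MeasurableSet A) {G D : X}
    {η : ℝ} (hη : 0 ≤ η) (hle : ∀ᵐ x ∂μ, ‖ι G x‖ ≤ ‖ι D x‖)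
    (hoff : ∀ᵐ x ∂μ, x ∉ A → ‖ι G x‖ ≤ η * ‖ι D x‖) :
    ‖G‖ ≤ ‖h.restrict hA D‖ + η * ‖D‖ := by
  have hin : ‖h.restrict hA G‖ ≤ ‖h.restrict hA D‖ := by
    refine h.norm_le_norm ?_
    filter_upwards [h.coe_restrict hA G, h.coe_restrict hA D, hle] with x hxG hxD hx
    rw [hxG, hxD, norm_indicator_eq_indicator_norm, norm_indicator_eq_indicator_norm]
    exact Set.indicator_le_indicator hx
  have hout : ‖h.restrict hA.compl G‖ ≤ ‖(η : 𝕜) • D‖ := by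
    refine h.norm_le_norm ?_
    filter_upwards [h.coe_restrict hA.compl G, hoff] with x hxG hx
    rw [hxG, map_smul, Pi.smul_apply, norm_smul, RCLike.norm_of_nonneg hη,
      norm_indicator_eq_indicator_norm]
    exact Set.indicator_apply_le' hx fun _ => by positivity
  rw [h.restrict_compl hA, norm_smul, RCLike.norm_of_nonneg hη] at hout
  calc ‖G‖ = ‖h.restrict hA G + (G - h.restrict hA G)‖ := by rw [add_sub_cancel]
    _ ≤ ‖h.restrict hA G‖ + ‖G - h.restrict hA G‖ := norm_add_le _ _
    _ ≤ ‖h.restrict hA D‖ + η * ‖D‖ := add_le_add hin hout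

theorem tendsto_zero_of_dominated (h : IsSolidRealization μ ι) {D : X}
    (hD : h.HasAbsolutelyContinuousNorm D) {G : ℕ → X}
    (hle : ∀ n, ∀ᵐ x ∂μ, ‖ι (G n) x‖ ≤ ‖ι D x‖)
    (hlim : ∀ᵐ x ∂μ, Tendsto (fun n => ι (G n) x) atTop (𝓝 0)) :
    Tendsto G atTop (𝓝 0) := by
  rw [tendsto_zero_iff_norm_tendsto_zero]
  refine (nhds_basis_zero_abs_lt ℝ).tendsto_right_iff.2 fun ε hε => ?_
  obtain ⟨η, hη, hηD⟩ := exists_pos_mul_lt (half_pos hε) ‖D‖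
  have hsmall : ∀ᵐ x ∂μ, ∀ᶠ n in atTop, ‖ι (G n) x‖ ≤ η * ‖ι D x‖ := by
    filter_upwards [hlim, ae_all_iff.2 hle] with x hx hdom
    rcases (norm_nonneg (ι D x)).eq_or_lt with hzero | hpos
    · exact .of_forall fun n => (hdom n).trans (by rw [← hzero, mul_zero])
    · exact (tendsto_zero_iff_norm_tendsto_zero.1 hx).eventually_le_const (mul_pos hη hpos)
  obtain ⟨A, hA, hanti, hnull, hoff⟩ := exists_antitone_measurableSet_le_of_eventually_le
    (fun n => (h.aestronglyMeasurable (G n)).norm.aemeasurable)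
    ((h.aestronglyMeasurable D).norm.aemeasurable.const_mul η) hsmall
  filter_upwards [(hD A hA hanti hnull).eventually_lt_const (half_pos hε)] with n hn
  rw [abs_norm]
  linarith [h.norm_le_norm_restrict_add (hA n) hη.le (hle n) (hoff n)]

theorem tendsto_of_dominated (h : IsSolidRealization μ ι) {D F : X}
    (hD : h.HasAbsolutelyContinuousNorm D) {G : ℕ → X}
    (hle : ∀ n, ∀ᵐ x ∂μ, ‖ι (G n) x - ι F x‖ ≤ ‖ι D x‖)
    (hlim : ∀ᵐ x ∂μ, Tendsto (fun n => ι (G n) x) atTop (𝓝 (ι F x))) :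
    Tendsto G atTop (𝓝 F) := by
  rw [← tendsto_sub_nhds_zero_iff]
  refine h.tendsto_zero_of_dominated hD (fun n => ?_) ?_
  · simpa only [map_sub, Pi.sub_apply] using hle n
  · simpa only [map_sub, Pi.sub_apply, tendsto_sub_nhds_zero_iff] using hlim

theorem restrict_iUnion_mem (h : IsSolidRealization μ ι) {T : Submodule 𝕜 X}
    (hT : IsClosed (T : Set X)) {D : X} (hD : h.HasAbsolutelyContinuousNorm D) {f : ℕ → Set α}
    (hf : ∀ i, MeasurableSet (f i)) (hdisj : Pairwise (Function.onFun Disjoint f))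
    (hmem : ∀ i, h.restrict (hf i) D ∈ T) : h.restrict (.iUnion hf) D ∈ T := by
  have hpartial (n : ℕ) : ι (∑ i ∈ Finset.range n, h.restrict (hf i) D) =ᵐ[μ]
      (⋃ i ∈ Finset.range n, f i).indicator (ι D) := by
    filter_upwards [ae_all_iff.2 fun i => h.coe_restrict (hf i) D] with x hx
    rw [map_sum, Finset.sum_apply, Finset.indicator_biUnion _ _ fun i _ j _ hij => hdisj hij]
    exact Finset.sum_congr rfl fun i _ => hx i
  refine hT.mem_of_tendsto (h.tendsto_of_dominated hD
    (G := fun n => ∑ i ∈ Finset.range n, h.restrict (hf i) D) (fun n => ?_) ?_)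
    (.of_forall fun n => T.sum_mem fun i _ => hmem i)
  · filter_upwards [hpartial n, h.coe_restrict (.iUnion hf) D] with x hxn hx
    rw [hxn, hx, ← norm_neg, neg_sub, ← Pi.sub_apply, ← Set.indicator_sdiff]
    · exact norm_indicator_le_norm_self _ _
    · exact Set.iUnion₂_subset fun i _ => Set.subset_iUnion f i
  · filter_upwards [ae_all_iff.2 hpartial, h.coe_restrict (.iUnion hf) D] with x hxn hx
    simp only [hxn, hx]
    exact ((tendsto_indicator_biUnion_finset f (ι D) x).comp tendsto_finset_range).mono_right
      (pure_le_nhds _)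

theorem restrict_mem_of_isOpen [TopologicalSpace α] [BorelSpace α] (h : IsSolidRealization μ ι)
    {T : Submodule 𝕜 X} (hT : IsClosed (T : Set X)) {D : X} (hD : h.HasAbsolutelyContinuousNorm D)
    (hopen : ∀ (U : Set α) (hU : IsOpen U), h.restrict hU.measurableSet D ∈ T)
    (hA : MeasurableSet A) : h.restrict hA D ∈ T := by
  have huniv : h.restrict isOpen_univ.measurableSet D = D := h.eq_of_ae_eq <| by
    simpa only [Set.indicator_univ] using h.coe_restrict isOpen_univ.measurableSet D
  induction A, hA using MeasurableSet.induction_on_open with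
  | isOpen U hU => exact hopen U hU
  | compl A hA ih =>
    rw [h.restrict_compl hA]
    exact T.sub_mem (huniv ▸ hopen _ isOpen_univ) ih
  | iUnion f hdisj hf ih => exact h.restrict_iUnion_mem hT hD hf hdisj ih

end IsSolidRealization

/-! ### Separability of `E` -/

theorem iteratedDeriv_eq_zero_of_notMem_tsupport {𝕜 F : Type*} [NontriviallyNormedField 𝕜]
    [NormedAddCommGroup F] [NormedSpace 𝕜 F] {f : 𝕜 → F} {x : 𝕜} (n : ℕ) (hx : x ∉ tsupport f) :
    iteratedDeriv n f x = 0 := by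
  have hzero : iteratedFDeriv 𝕜 n f x = 0 :=
    Function.notMem_support.1 fun h => hx (support_iteratedFDeriv_subset n h)
  rw [iteratedDeriv_eq_iteratedFDeriv, hzero, zero_apply]

theorem IsTestPlus.contDiff {g : ℝ → ℂ} (hg : IsTestPlus g) (n : ℕ) : ContDiff ℝ n g :=
  hg.1.of_le (mod_cast le_top)

theorem IsTestPlus.sub {g g' : ℝ → ℂ} (hg : IsTestPlus g) (hg' : IsTestPlus g') :
    IsTestPlus (g - g') :=
  ⟨hg.1.sub hg'.1, sub_eq_add_neg g g' ▸ hg.2.1.add hg'.2.1.neg,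
    (tsupport_sub g g').trans (Set.union_subset hg.2.2 hg'.2.2)⟩

namespace WHSpace

theorem exists_norm_le_mul_of_iteratedDeriv_le (W : WHSpace) {K : Set ℝ} (hK : IsCompact K) :
    ∃ (C : NNReal) (N : ℕ), ∀ (f : W.E) (g : ℝ → ℂ), IsTestPlus g → tsupport g ⊆ K →
      W.toFun f =ᵐ[volume] g → ∀ r ≥ 0,
      (∀ k < N, ∀ x ∈ K, ‖iteratedDeriv k g x‖ ≤ r) → ‖f‖ ≤ C * r := by
  obtain ⟨C, hC, N, hbound⟩ := W.test_cont K hK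
  refine ⟨(C * (N + 1)).toNNReal, N + 1, fun f g hg hgK hfg r hr hderiv => ?_⟩
  have hsup : ∀ k ∈ Finset.range (N + 1), ⨆ x, ‖iteratedDeriv k g x‖ ≤ r := fun k hk => by
    refine ciSup_le fun x => ?_
    by_cases hx : x ∈ K
    · exact hderiv k (Finset.mem_range.1 hk) x hx
    · rwa [iteratedDeriv_eq_zero_of_notMem_tsupport k fun h => hx (hgK h), norm_zero]
  calc ‖f‖ ≤ C * ∑ k ∈ Finset.range (N + 1), ⨆ x, ‖iteratedDeriv k g x‖ := hbound f g hg hgK hfg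
    _ ≤ C * ((N + 1 : ℕ) • r) := by
      gcongr
      simpa only [Finset.card_range] using Finset.sum_le_card_nsmul _ _ _ hsup
    _ = (C * (N + 1)).toNNReal * r := by
      rw [Real.coe_toNNReal _ (by positivity), nsmul_eq_mul, mul_assoc, Nat.cast_succ]

/-- The elements of `E` given by test functions supported in `K`. -/
def testsOn (W : WHSpace) (K : Set ℝ) : Set W.E :=
  {f | ∃ g : ℝ → ℂ, IsTestPlus g ∧ tsupport g ⊆ K ∧ W.toFun f =ᵐ[volume] g}

/-- Test functions supported in `K` embed, by their first derivatives, into the separable space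
`C(K, ℂ) ^ N`; the continuity of `C_c^∞ ⊆ E` says that the inverse is Lipschitz. -/
theorem isSeparable_testsOn (W : WHSpace) {K : Set ℝ} (hK : IsCompact K) :
    TopologicalSpace.IsSeparable (W.testsOn K) := by
  obtain ⟨C, N, hbound⟩ := W.exists_norm_le_mul_of_iteratedDeriv_le hK
  have : CompactSpace K := isCompact_iff_compactSpace.1 hK
  choose g hg hgK hfg using fun f : W.testsOn K => f.2
  let jet : W.testsOn K → Fin N → C(K, ℂ) := fun f k =>
    ⟨K.domRestrict (iteratedDeriv k (g f)),
      (((hg f).contDiff k).continuous_iteratedDeriv k le_rfl).comp continuous_subtype_val⟩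
  have hjet : AntilipschitzWith C jet := .of_le_mul_dist fun f f' => by
    rw [Subtype.dist_eq, dist_eq_norm]
    refine hbound _ (g f - g f') ((hg f).sub (hg f'))
      ((tsupport_sub _ _).trans (Set.union_subset (hgK f) (hgK f'))) ?_ _ dist_nonneg
      fun k hk x hx => ?_
    · rw [map_sub]
      exact (hfg f).sub (hfg f')
    · rw [iteratedDeriv_sub ((hg f).contDiff k).contDiffAt ((hg f').contDiff k).contDiffAt,
        ← dist_eq_norm]
      exact (ContinuousMap.dist_apply_le_dist (f := jet f ⟨k, hk⟩) (g := jet f' ⟨k, hk⟩)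
        ⟨x, hx⟩).trans (dist_le_pi_dist (jet f) (jet f') ⟨k, hk⟩)
  have : TopologicalSpace.SeparableSpace (W.testsOn K) := separableSpace_of_antilipschitzWith hjet
  exact .of_subtype _

theorem separableSpace (W : WHSpace) : TopologicalSpace.SeparableSpace W.E := by
  have htests : TopologicalSpace.IsSeparable (⋃ n : ℕ, W.testsOn (Metric.closedBall 0 n)) :=
    .iUnion fun n => W.isSeparable_testsOn (isCompact_closedBall 0 (n : ℝ))
  have hdense : Dense (⋃ n : ℕ, W.testsOn (Metric.closedBall 0 n)) := by
    refine W.test_dense.mono ?_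
    rintro f ⟨g, hg, hfg⟩
    obtain ⟨r, hr⟩ := hg.2.1.isCompact.isBounded.subset_closedBall 0
    obtain ⟨n, hn⟩ := exists_nat_ge r
    exact Set.mem_iUnion.2 ⟨n, g, hg, hr.trans (Metric.closedBall_subset_closedBall hn), hfg⟩
  rw [← TopologicalSpace.isSeparable_univ_iff, ← hdense.closure_eq]
  exact htests.closure

end WHSpace

/-! ### Absolute continuity of the norm of `Ē` -/

namespace WHSpaceH

variable {W : WHSpace} {H : Type} [NormedAddCommGroup H] [InnerProductSpace ℂ H]

theorem exists_of_norm_eq (V : WHSpaceH W H) (F : V.Eb) {G : ℝ → H}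
    (hG : AEStronglyMeasurable G volume) (hGF : ∀ᵐ x, ‖G x‖ = ‖V.toFun F x‖) :
    ∃ F' : V.Eb, V.toFun F' =ᵐ[volume] G ∧ ‖F'‖ = ‖F‖ := by
  obtain ⟨e, he⟩ := V.norm_mem F
  have heG : W.toFun e =ᵐ[volume] fun x => (‖G x‖ : ℂ) := by
    filter_upwards [he, hGF] with x hx hnorm
    rw [hx, hnorm]
  have hsupp : ∀ᵐ x, x < 0 → G x = 0 := by
    filter_upwards [V.supp F, hGF] with x hx hnorm hneg
    rwa [hx hneg, norm_zero, norm_eq_zero] at hnorm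
  obtain ⟨F', hF'⟩ := V.mem_of_norm G hG hsupp ⟨e, heG⟩
  refine ⟨F', hF', (V.norm_eq F' e ?_).trans (V.norm_eq F e he).symm⟩
  filter_upwards [heG, hF'] with x hx hxF'
  rw [hx, hxF']

theorem exists_exp_smul (V : WHSpaceH W H) (F : V.Eb) {θ : ℝ → ℝ} (hθ : AEMeasurable θ volume) :
    ∃ F' : V.Eb, V.toFun F' =ᵐ[volume] (fun x => exp (θ x * I) • V.toFun F x) ∧ ‖F'‖ = ‖F‖ := by
  refine V.exists_of_norm_eq F (.smul ?_ (V.meas F)) (ae_of_all _ fun x => ?_)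
  · exact ((measurable_ofReal.comp_aemeasurable hθ).mul_const I).cexp.aestronglyMeasurable
  · rw [norm_smul, norm_exp_ofReal_mul_I, one_mul]

theorem exists_cos_smul (V : WHSpaceH W H) (F : V.Eb) {θ : ℝ → ℝ} (hθ : AEMeasurable θ volume) :
    ∃ F' : V.Eb, V.toFun F' =ᵐ[volume] (fun x => (Real.cos (θ x) : ℂ) • V.toFun F x) ∧
      ‖F'‖ ≤ ‖F‖ := by
  obtain ⟨P, hP, hPnorm⟩ := V.exists_exp_smul F hθ
  obtain ⟨Q, hQ, hQnorm⟩ := V.exists_exp_smul F hθ.neg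
  refine ⟨(2⁻¹ : ℂ) • (P + Q), ?_, ?_⟩
  · rw [map_smul, map_add]
    filter_upwards [hP, hQ] with x hxP hxQ
    rw [Pi.smul_apply, Pi.add_apply, hxP, hxQ, ← add_smul, smul_smul, ofReal_cos, Complex.cos,
      Pi.neg_apply, ofReal_neg, inv_mul_eq_div]
  · calc ‖(2⁻¹ : ℂ) • (P + Q)‖ = 2⁻¹ * ‖P + Q‖ := by rw [norm_smul, norm_inv, norm_ofNat]
      _ ≤ 2⁻¹ * (‖P‖ + ‖Q‖) := by gcongr; exact norm_add_le P Q
      _ = ‖F‖ := by rw [hPnorm, hQnorm]; ring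

/-- Write `‖G‖ = cos θ · ‖F‖`: multiplication by `cos θ` is the average of the multiplications
by `e^{iθ}` and `e^{-iθ}`, which do not change the pointwise norm. -/
theorem exists_of_norm_le (V : WHSpaceH W H) (F : V.Eb) {G : ℝ → H}
    (hG : AEStronglyMeasurable G volume) (hGF : ∀ᵐ x, ‖G x‖ ≤ ‖V.toFun F x‖) :
    ∃ F' : V.Eb, V.toFun F' =ᵐ[volume] G ∧ ‖F'‖ ≤ ‖F‖ := by
  have hθ : AEMeasurable (fun x => Real.arccos (‖G x‖ / ‖V.toFun F x‖)) volume :=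
    Real.continuous_arccos.measurable.comp_aemeasurable
      (hG.norm.aemeasurable.div (V.meas F).norm.aemeasurable)
  obtain ⟨P, hP, hPnorm⟩ := V.exists_cos_smul F hθ
  have hGP : ∀ᵐ x, ‖G x‖ = ‖V.toFun P x‖ := by
    filter_upwards [hGF, hP] with x hx hxP
    have hratio : 0 ≤ ‖G x‖ / ‖V.toFun F x‖ := by positivity
    rw [hxP, Real.cos_arccos (neg_one_lt_zero.le.trans hratio)
      (div_le_one_of_le₀ hx (norm_nonneg _)), norm_smul, norm_real,
      Real.norm_of_nonneg hratio, div_mul_cancel_of_imp fun h0 =>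
        le_antisymm (h0 ▸ hx) (norm_nonneg _)]
  obtain ⟨F', hF', hF'norm⟩ := V.exists_of_norm_eq P hG hGP
  exact ⟨F', hF', hF'norm.trans_le hPnorm⟩

theorem isSolidRealization (V : WHSpaceH W H) : IsSolidRealization volume V.toFun where
  eq_of_ae_eq := V.inj _ _
  aestronglyMeasurable := V.meas
  exists_of_norm_le F _ := V.exists_of_norm_le F

/-- The element `x ↦ ‖F x‖` of `E`. -/
def normProfile (V : WHSpaceH W H) (F : V.Eb) : W.E :=
  (V.norm_mem F).choose

theorem coe_normProfile (V : WHSpaceH W H) (F : V.Eb) :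
    W.toFun (V.normProfile F) =ᵐ[volume] fun x => (‖V.toFun F x‖ : ℂ) :=
  (V.norm_mem F).choose_spec

/-- For nested sets the difference of the two norm profiles is itself a norm profile; `E` is not
assumed to be a lattice, so differences of general norm profiles are out of control. -/
theorem norm_normProfile_restrict_sub (V : WHSpaceH W H) (F : V.Eb) {A B : Set ℝ}
    (hA : MeasurableSet A) (hB : MeasurableSet B) (hAB : A ⊆ B) :
    ‖V.normProfile (V.isSolidRealization.restrict hB F) -
      V.normProfile (V.isSolidRealization.restrict hA F)‖ =
      ‖V.isSolidRealization.restrict (hB.diff hA) F‖ := by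
  have h := V.isSolidRealization
  refine (V.norm_eq _ _ ?_).symm
  rw [map_sub]
  filter_upwards [V.coe_normProfile (h.restrict hB F), V.coe_normProfile (h.restrict hA F),
    h.coe_restrict hB F, h.coe_restrict hA F, h.coe_restrict (hB.diff hA) F]
    with x hnB hnA hxB hxA hxD
  rw [Pi.sub_apply, hnB, hnA, hxB, hxA, hxD, ← ofReal_sub]
  simp only [norm_indicator_eq_indicator_norm]
  rw [Set.indicator_sdiff hAB, Pi.sub_apply]

theorem le_dist_normProfile_restrict (V : WHSpaceH W H) (F : V.Eb) {A B C : Set ℝ}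
    (hA : MeasurableSet A) (hB : MeasurableSet B) (hC : MeasurableSet C) (hAB : A ⊆ B)
    (hCB : C ⊆ B \ A) :
    ‖V.isSolidRealization.restrict hC F‖ ≤
      dist (V.normProfile (V.isSolidRealization.restrict hA F))
        (V.normProfile (V.isSolidRealization.restrict hB F)) := by
  rw [dist_comm, dist_eq_norm, V.norm_normProfile_restrict_sub F hA hB hAB]
  exact V.isSolidRealization.norm_restrict_le_of_subset hC (hB.diff hA) hCB F

theorem exists_norm_restrict_lt (V : WHSpaceH W H) (F : V.Eb) {B : ℕ → Set ℝ}
    (hB : ∀ k, MeasurableSet (B k)) (hdisj : Pairwise (Function.onFun Disjoint B))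
    {δ : ℝ} (hδ : 0 < δ) : ∃ k, ‖V.isSolidRealization.restrict (hB k) F‖ < δ := by
  by_contra! hlarge
  obtain ⟨q, hq⟩ := exists_surjective_nat ℚ
  let C : ℝ → Set ℝ := fun t => ⋃ k ∈ {k | (q k : ℝ) < t}, B k
  have hC (t : ℝ) : MeasurableSet (C t) := .biUnion (Set.to_countable _) fun k _ => hB k
  let e : ℝ → W.E := fun t => V.normProfile (V.isSolidRealization.restrict (hC t) F)
  have hsep_lt {s t : ℝ} (hst : s < t) : δ ≤ dist (e s) (e t) := by
    obtain ⟨r, hsr, hrt⟩ := exists_rat_btwn hst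
    obtain ⟨k, rfl⟩ := hq r
    have hmono : C s ⊆ C t := Set.biUnion_subset_biUnion_left fun j (hj : _ < s) => hj.trans hst
    have hpiece : B k ⊆ C t \ C s := Set.subset_sdiff.2
      ⟨Set.subset_biUnion_of_mem (u := B) hrt, Set.disjoint_iUnion₂_right.2 fun j (hj : _ < s) =>
        hdisj fun hkj => (hkj ▸ hj).not_gt hsr⟩
    exact (hlarge k).trans (V.le_dist_normProfile_restrict F (hC s) (hC t) (hB k) hmono hpiece)
  have hsep : Pairwise fun s t => δ ≤ dist (e s) (e t) := fun s t hst =>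
    hst.lt_or_gt.elim hsep_lt fun hts => (hsep_lt hts).trans_eq (dist_comm _ _)
  have := W.separableSpace
  exact not_countable (countable_of_pairwise_le_dist hδ hsep)

theorem hasAbsolutelyContinuousNorm (V : WHSpaceH W H) (F : V.Eb) :
    V.isSolidRealization.HasAbsolutelyContinuousNorm F :=
  V.isSolidRealization.hasAbsolutelyContinuousNorm_of_exists_norm_restrict_lt
    fun _ hB hdisj _ hδ => V.exists_norm_restrict_lt F hB hdisj hδ

end WHSpaceH

/-! ### Smooth cut-offs -/

theorem exists_contDiff_tendsto_indicator {E : Type*} [NormedAddCommGroup E] [NormedSpace ℝ E]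
    [FiniteDimensional ℝ E] {U : Set E} (hU : IsOpen U) :
    ∃ ψ : ℕ → E → ℝ, (∀ n, ContDiff ℝ (⊤ : ℕ∞) (ψ n)) ∧ (∀ n x, ψ n x ∈ Set.Icc 0 1) ∧
      ∀ x, Tendsto (fun n => ψ n x) atTop (𝓝 (U.indicator 1 x)) := by
  obtain ⟨f, hfU, hf, hf01⟩ := hU.exists_contDiff_support_eq (n := (⊤ : ℕ∞))
  refine ⟨fun n x => Real.smoothTransition (n * f x),
    fun n => Real.smoothTransition.contDiff.comp (contDiff_const.mul hf),
    fun n x => ⟨Real.smoothTransition.nonneg _, Real.smoothTransition.le_one _⟩, fun x => ?_⟩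
  by_cases hx : x ∈ U
  · have hpos : 0 < f x := (hf01 ⟨x, rfl⟩).1.lt_of_ne' (by rwa [← hfU] at hx)
    rw [Set.indicator_of_mem hx, Pi.one_apply]
    refine tendsto_const_nhds.congr' ?_
    filter_upwards [(tendsto_natCast_atTop_atTop.atTop_mul_const hpos).eventually_ge_atTop 1]
      with n hn
    exact (Real.smoothTransition.one_of_one_le hn).symm
  · have hzero : f x = 0 := Function.notMem_support.1 (by rwa [hfU])
    simp only [Set.indicator_of_notMem hx, hzero, mul_zero, Real.smoothTransition.zero,
      tendsto_const_nhds]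

theorem exists_isTestPlus_eq_one {K : Set ℝ} (hK : IsCompact K) (hKpos : K ⊆ Set.Ioi 0) :
    ∃ φ : ℝ → ℂ, IsTestPlus φ ∧ ∀ x ∈ K, φ x = 1 := by
  obtain ⟨L, hL, hKL, hLpos⟩ := exists_compact_between hK isOpen_Ioi hKpos
  obtain ⟨f, hf, -, hsupp, hone⟩ := exists_contMDiff_support_eq_eq_one_iff
    (modelWithCornersSelf ℝ ℝ) (n := (⊤ : ℕ∞)) isOpen_interior hK.isClosed hKL
  have htsupp : tsupport (fun x => (f x : ℂ)) ⊆ L := by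
    refine closure_minimal (fun x hx => interior_subset (hsupp ▸ ?_)) hL.isClosed
    exact fun h => hx (ofReal_eq_zero.2 h)
  exact ⟨fun x => f x, ⟨ofRealCLM.contDiff.comp hf.contDiff,
    hL.of_isClosed_subset (isClosed_tsupport _) htsupp, htsupp.trans hLpos⟩,
    fun x hx => ofReal_eq_one.2 ((hone x).1 hx)⟩

theorem IsTestPlus.contDiff_mul {ψ φ : ℝ → ℂ} (hψ : ContDiff ℝ (⊤ : ℕ∞) ψ) (hφ : IsTestPlus φ) :
    IsTestPlus (ψ * φ) :=
  ⟨hψ.mul hφ.1, hφ.2.1.mul_left, (tsupport_mul_subset_right).trans hφ.2.2⟩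

theorem IsTestPlus.smul_const {H : Type*} [AddCommGroup H] [Module ℂ H] {φ : ℝ → ℂ}
    (hφ : IsTestPlus φ) (u : H) : IsTestPlusH fun x => φ x • u :=
  ⟨1, fun _ => φ, fun _ => u, fun _ => hφ, by simp only [Fin.sum_univ_one]⟩

namespace IsTestPlusH

variable {H : Type*} [AddCommGroup H] [Module ℂ H] {G G' : ℝ → H}

theorem zero : IsTestPlusH (0 : ℝ → H) :=
  ⟨0, Fin.elim0, Fin.elim0, fun i => i.elim0, by simp only [Fin.sum_univ_zero]; rfl⟩

theorem add (hG : IsTestPlusH G) (hG' : IsTestPlusH G') : IsTestPlusH (G + G') := by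
  obtain ⟨n, φ, u, hφ, rfl⟩ := hG
  obtain ⟨m, ψ, v, hψ, rfl⟩ := hG'
  refine ⟨n + m, Fin.append φ ψ, Fin.append u v, (Fin.forall_fin_add _).2 ⟨?_, ?_⟩, ?_⟩
  · simpa only [Fin.append_left] using hφ
  · simpa only [Fin.append_right] using hψ
  · funext x
    simp only [Pi.add_apply, Fin.sum_univ_add, Fin.append_left, Fin.append_right]

theorem contDiff_smul {ψ : ℝ → ℂ} (hψ : ContDiff ℝ (⊤ : ℕ∞) ψ) (hG : IsTestPlusH G) :
    IsTestPlusH fun x => ψ x • G x := by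
  obtain ⟨n, φ, u, hφ, rfl⟩ := hG
  refine ⟨n, fun i => ψ * φ i, u, fun i => (hφ i).contDiff_mul hψ, ?_⟩
  simp only [Finset.smul_sum, smul_smul, Pi.mul_apply]

end IsTestPlusH

/-! ### Density of the tensor product -/

theorem eventually_mem_Icc_one_div_add_one {x : ℝ} (hx : 0 < x) :
    ∀ᶠ n : ℕ in atTop, x ∈ Set.Icc (1 / ((n : ℝ) + 1)) (n + 1) := by
  filter_upwards [tendsto_one_div_add_atTop_nhds_zero_nat.eventually_le_const hx,
    tendsto_natCast_atTop_atTop.eventually_ge_atTop x] with n hlower hupper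
  exact ⟨hlower, hupper.trans (by linarith)⟩

namespace WHSpaceH

variable {W : WHSpace} {H : Type} [NormedAddCommGroup H] [InnerProductSpace ℂ H]

/-- The algebraic tensor product `C_c^∞((0,∞)) ⊗ H`, as a subspace of `Ē`. -/
def tensorSubmodule (V : WHSpaceH W H) : Submodule ℂ V.Eb where
  carrier := {F | ∃ G : ℝ → H, IsTestPlusH G ∧ V.toFun F =ᵐ[volume] G}
  zero_mem' := ⟨0, .zero, by rw [map_zero]⟩
  add_mem' := by
    rintro F F' ⟨G, hG, hFG⟩ ⟨G', hG', hFG'⟩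
    exact ⟨G + G', hG.add hG', by rw [map_add]; exact hFG.add hFG'⟩
  smul_mem' := by
    rintro c F ⟨G, hG, hFG⟩
    exact ⟨c • G, hG.contDiff_smul contDiff_const, by rw [map_smul]; exact hFG.const_smul c⟩

theorem restrict_isOpen_mem_topologicalClosure (V : WHSpaceH W H) {D : V.Eb}
    (hD : D ∈ V.tensorSubmodule) {U : Set ℝ} (hU : IsOpen U) :
    V.isSolidRealization.restrict hU.measurableSet D ∈ V.tensorSubmodule.topologicalClosure := by
  have h := V.isSolidRealization
  obtain ⟨G, hG, hDG⟩ := hD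
  obtain ⟨ψ, hψ, hψ01, hψlim⟩ := exists_contDiff_tendsto_indicator hU
  have hψG (n : ℕ) : IsTestPlusH fun x => (ψ n x : ℂ) • G x :=
    hG.contDiff_smul (ofRealCLM.contDiff.comp (hψ n))
  choose P hP using fun n => V.tensor_mem _ (hψG n)
  have hrestrict : ∀ᵐ x, V.toFun (h.restrict hU.measurableSet D) x =
      ((U.indicator 1 x : ℝ) : ℂ) • G x := by
    filter_upwards [h.coe_restrict hU.measurableSet D, hDG] with x hxU hx
    rw [hxU]
    by_cases hmem : x ∈ U <;> simp [hmem, hx]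
  refine mem_closure_of_tendsto (h.tendsto_of_dominated (V.hasAbsolutelyContinuousNorm D)
    (G := P) (fun n => ?_) ?_) (.of_forall fun n => ⟨_, hψG n, hP n⟩)
  · filter_upwards [hP n, hrestrict, hDG] with x hxP hxU hx
    rw [hxP, hxU, hx, ← sub_smul, norm_smul, ← ofReal_sub, norm_real]
    have hU01 : U.indicator 1 x ∈ Set.Icc (0 : ℝ) 1 :=
      isClosed_Icc.mem_of_tendsto (hψlim x) (.of_forall fun n => hψ01 n x)
    exact mul_le_of_le_one_left (norm_nonneg _)
      (abs_sub_le_of_nonneg_of_le (hψ01 n x).1 (hψ01 n x).2 hU01.1 hU01.2)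
  · filter_upwards [ae_all_iff.2 hP, hrestrict] with x hxP hxU
    simp only [hxP, hxU]
    exact ((continuous_ofReal.tendsto _).comp (hψlim x)).smul_const _

theorem restrict_mem_topologicalClosure (V : WHSpaceH W H) {D : V.Eb}
    (hD : D ∈ V.tensorSubmodule) {A : Set ℝ} (hA : MeasurableSet A) :
    V.isSolidRealization.restrict hA D ∈ V.tensorSubmodule.topologicalClosure :=
  V.isSolidRealization.restrict_mem_of_isOpen V.tensorSubmodule.isClosed_topologicalClosure
    (V.hasAbsolutelyContinuousNorm D) (fun _ => V.restrict_isOpen_mem_topologicalClosure hD) hA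

theorem exists_mem_topologicalClosure_ae_eq_indicator_const (V : WHSpaceH W H) {K A : Set ℝ}
    (hK : IsCompact K) (hKpos : K ⊆ Set.Ioi 0) (hA : MeasurableSet A) (hAK : A ⊆ K) (u : H) :
    ∃ F ∈ V.tensorSubmodule.topologicalClosure,
      V.toFun F =ᵐ[volume] A.indicator fun _ => u := by
  obtain ⟨φ, hφ, hone⟩ := exists_isTestPlus_eq_one hK hKpos
  obtain ⟨D, hD⟩ := V.tensor_mem _ (hφ.smul_const u)
  refine ⟨_, V.restrict_mem_topologicalClosure ⟨_, hφ.smul_const u, hD⟩ hA, ?_⟩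
  filter_upwards [V.isSolidRealization.coe_restrict hA D, hD] with x hxA hx
  rw [hxA]
  by_cases hmem : x ∈ A
  · rw [Set.indicator_of_mem hmem, Set.indicator_of_mem hmem, hx, hone x (hAK hmem), one_smul]
  · rw [Set.indicator_of_notMem hmem, Set.indicator_of_notMem hmem]

theorem exists_mem_topologicalClosure_ae_eq_indicator_simpleFunc (V : WHSpaceH W H) {K : Set ℝ}
    (hK : IsCompact K) (hKpos : K ⊆ Set.Ioi 0) (s : SimpleFunc ℝ H) :
    ∃ F ∈ V.tensorSubmodule.topologicalClosure, V.toFun F =ᵐ[volume] K.indicator s := by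
  classical
  induction s using SimpleFunc.induction with
  | const u hA =>
    obtain ⟨F, hF, hFu⟩ := V.exists_mem_topologicalClosure_ae_eq_indicator_const hK hKpos
      (hK.measurableSet.inter hA) Set.inter_subset_left u
    refine ⟨F, hF, hFu.trans (.of_eq ?_)⟩
    rw [← Set.indicator_indicator, SimpleFunc.coe_piecewise, SimpleFunc.const_zero,
      SimpleFunc.coe_zero, Set.piecewise_eq_indicator, SimpleFunc.coe_const, Function.const_def]
  | add _ hf hg =>
    obtain ⟨F, hF, hFf⟩ := hf
    obtain ⟨G, hG, hGg⟩ := hg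
    refine ⟨F + G, add_mem hF hG, ?_⟩
    rw [map_add, SimpleFunc.coe_add, Set.indicator_add']
    exact hFf.add hGg

theorem mem_topologicalClosure_tensorSubmodule (V : WHSpaceH W H) (F : V.Eb) :
    F ∈ V.tensorSubmodule.topologicalClosure := by
  borelize H
  set f := (V.meas F).mk (V.toFun F)
  have hfs : StronglyMeasurable f := (V.meas F).stronglyMeasurable_mk
  have hf : V.toFun F =ᵐ[volume] f := (V.meas F).ae_eq_mk
  have := hfs.separableSpace_range_union_singleton (b := 0)
  let s : ℕ → SimpleFunc ℝ H :=
    SimpleFunc.approxOn f hfs.measurable (Set.range f ∪ {0}) 0 (.inr rfl)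
  let K : ℕ → Set ℝ := fun n => Set.Icc (1 / ((n : ℝ) + 1)) (n + 1)
  choose G hGmem hG using fun n =>
    V.exists_mem_topologicalClosure_ae_eq_indicator_simpleFunc (K := K n) isCompact_Icc
      (fun x hx => Nat.one_div_pos_of_nat.trans_le hx.1) (s n)
  refine V.tensorSubmodule.isClosed_topologicalClosure.mem_of_tendsto
    (V.isSolidRealization.tendsto_of_dominated (V.hasAbsolutelyContinuousNorm ((3 : ℂ) • F))
      (fun n => ?_) ?_) (.of_forall hGmem)
  · filter_upwards [hG n, hf] with x hxG hx
    rw [hxG, map_smul, Pi.smul_apply, hx, norm_smul, norm_ofNat]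
    calc ‖(K n).indicator (s n) x - f x‖ ≤ ‖(K n).indicator (s n) x‖ + ‖f x‖ := norm_sub_le _ _
      _ ≤ ‖s n x‖ + ‖f x‖ := by gcongr; exact norm_indicator_le_norm_self _ _
      _ ≤ (‖f x‖ + ‖f x‖) + ‖f x‖ := by
        gcongr; exact SimpleFunc.norm_approxOn_zero_le hfs.measurable (.inr rfl) x n
      _ = 3 * ‖f x‖ := by ring
  · have hslim (x : ℝ) : Tendsto (fun n => s n x) atTop (𝓝 (f x)) :=
      SimpleFunc.tendsto_approxOn hfs.measurable (.inr rfl) (subset_closure (.inl ⟨x, rfl⟩))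
    filter_upwards [ae_all_iff.2 hG, hf, V.supp F, Measure.ae_ne volume 0] with x hxG hx hxsupp hx0
    simp only [hxG, hx]
    rcases hx0.lt_or_gt with hneg | hpos
    · have hxK (n : ℕ) : x ∉ K n := fun h =>
        (hneg.trans Nat.one_div_pos_of_nat).not_ge h.1
      simp only [Set.indicator_of_notMem (hxK _), ← hx, hxsupp hneg, tendsto_const_nhds]
    · refine (hslim x).congr' ?_
      filter_upwards [eventually_mem_Icc_one_div_add_one hpos] with n hn
      exact (Set.indicator_of_mem hn _).symm

end WHSpaceH

theorem tensor_dense_general (W : WHSpace) (H : Type) [NormedAddCommGroup H]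
    [InnerProductSpace ℂ H] (V : WHSpaceH W H) :
    Dense {F : V.Eb | ∃ G : ℝ → H, IsTestPlusH G ∧ V.toFun F =ᵐ[volume] G} :=
  V.mem_topologicalClosure_tensorSubmodule

/-- `C_c^∞((0,∞)) ⊗ H` is dense in `Ē`. -/
theorem tensor_dense (W : WHSpace) (H : Type) [NormedAddCommGroup H]
    [InnerProductSpace ℂ H] [CompleteSpace H] [TopologicalSpace.SeparableSpace H]
    [Nontrivial H] (V : WHSpaceH W H) :
    Dense {F : V.Eb | ∃ G : ℝ → H, IsTestPlusH G ∧ V.toFun F =ᵐ[volume] G} :=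
  tensor_dense_general W H V
end
end
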